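/- arXiv:1604.02897 — 6 statements merged into one kernel-verified Lean document; each statement's English description precedes it below -/
import Mathlib

section
/- The Young complement G̃ is differentiable on (0,∞) and satisfies, for every s > 0, (g₁/(g₁ − 1))·G̃(s) ≤ s·G̃′(s) ≤ (g₀/(g₀ − 1))·G̃(s). -/
open Real MeasureTheory Set Filter

/-!
With `p = g₀ - 1` and `q = g₁ - 1`, the Orlicz condition says that `g r / r ^ p` is nondecreasing
and `g r / r ^ q` is nonincreasing, and only these two monotonicity properties matter. They make
`g` an increasing bijection of `(0, ∞)`. If `s = g t`, the supremum defining `G̃ s` is attained at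
`t`, so `G̃ s = s * t - G t` and, by the envelope principle, `G̃' s = t`. Comparing `g` on `(0, t)`
with the powers through `(t, g t)` gives `(p + 1) * G t ≤ t * g t ≤ (q + 1) * G t`, which is the
claim once `G t` is written as `s * t - G̃ s`.
-/

open scoped Topology

section YoungComplement

/-- The Young complement `G̃` of a function `G` on `[0, ∞)`. It is meaningful at the slopes `s` for
which `r ↦ s * r - G r` is bounded above on `[0, ∞)`; at the others `sSup` returns `0`. -/
noncomputable def youngComplement (G : ℝ → ℝ) (s : ℝ) : ℝ :=
  sSup ((fun r => s * r - G r) '' Ici 0)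

variable {G : ℝ → ℝ}

theorem youngComplement_eq_of_isMaxOn {s t : ℝ} (ht : 0 ≤ t)
    (hmax : IsMaxOn (fun r => s * r - G r) (Ici 0) t) :
    youngComplement G s = s * t - G t :=
  IsGreatest.csSup_eq ⟨mem_image_of_mem _ ht, forall_mem_image.2 hmax⟩

theorem hasDerivAt_of_subgradient {F φ : ℝ → ℝ} {s : ℝ} (hφ : ContinuousAt φ s)
    (hlower : ∀ᶠ y in 𝓝 s, φ s * (y - s) ≤ F y - F s)
    (hupper : ∀ᶠ y in 𝓝 s, F y - F s ≤ φ y * (y - s)) : HasDerivAt F (φ s) s := by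
  rw [hasDerivAt_iff_isLittleO, Asymptotics.isLittleO_iff]
  intro c hc
  filter_upwards [hlower, hupper, Metric.continuousAt_iff'.1 hφ c hc] with y hle hge hdist
  rw [smul_eq_mul, norm_eq_abs, norm_eq_abs, abs_of_nonneg (by linarith)]
  calc F y - F s - (y - s) * φ s ≤ (φ y - φ s) * (y - s) := by linarith
    _ ≤ |φ y - φ s| * |y - s| := (le_abs_self _).trans_eq (abs_mul _ _)
    _ ≤ c * |y - s| := mul_le_mul_of_nonneg_right hdist.le (abs_nonneg _)

theorem hasDerivAt_youngComplement_of_isMaxOn {φ : ℝ → ℝ} {s : ℝ} (hφ : ContinuousAt φ s)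
    (hφ_nonneg : ∀ᶠ y in 𝓝 s, 0 ≤ φ y)
    (hmax : ∀ᶠ y in 𝓝 s, IsMaxOn (fun r => y * r - G r) (Ici 0) (φ y)) :
    HasDerivAt (youngComplement G) (φ s) s := by
  have hs_nonneg := hφ_nonneg.self_of_nhds
  have hs_max := hmax.self_of_nhds
  have hs_eq := youngComplement_eq_of_isMaxOn hs_nonneg hs_max
  refine hasDerivAt_of_subgradient hφ ?_ ?_ <;>
    filter_upwards [hφ_nonneg, hmax] with y hy_nonneg hy_max <;>
    rw [youngComplement_eq_of_isMaxOn hy_nonneg hy_max, hs_eq]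
  · linarith [isMaxOn_iff.1 hy_max (φ s) hs_nonneg]
  · linarith [isMaxOn_iff.1 hs_max (φ y) hy_nonneg]

end YoungComplement

section MonotoneDensity

theorem continuousAt_of_invOn_of_monotoneOn {α β : Type*}
    [LinearOrder α] [TopologicalSpace α] [OrderTopology α] [DenselyOrdered α]
    [LinearOrder β] [TopologicalSpace β] [OrderTopology β]
    {f : α → β} {φ : β → α} {s : Set α} {t : Set β} {b : β}
    (hf : MonotoneOn f s) (hinv : InvOn φ f s t) (hfst : MapsTo f s t) (hφts : MapsTo φ t s)
    (ht : t ∈ 𝓝 b) (hs : s ∈ 𝓝 (φ b)) : ContinuousAt φ b := by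
  have hφ : MonotoneOn φ t :=
    Function.monotoneOn_of_rightInvOn_of_mapsTo hf hinv.2 hφts
  have himage : φ '' t = s := (hinv.symm.bijOn hφts hfst).image_eq
  exact continuousAt_of_monotoneOn_of_image_mem_nhds hφ ht (himage ▸ hs)

theorem intervalIntegrable_of_monotoneOn_uIoc {f : ℝ → ℝ} {a b : ℝ}
    {μ : Measure ℝ} [IsLocallyFiniteMeasure μ]
    (hf : MonotoneOn f (uIoc a b)) (hbdd : BddBelow (f '' uIoc a b)) :
    IntervalIntegrable f μ a b := by
  have hbdd' : BddAbove (f '' uIoc a b) := by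
    refine ⟨f (max a b), forall_mem_image.2 fun x hx => ?_⟩
    exact hf hx ⟨hx.1.trans_le hx.2, le_rfl⟩ hx.2
  obtain ⟨F, hF, hfF⟩ := hf.exists_monotone_extension hbdd hbdd'
  exact hF.intervalIntegrable.congr hfF.symm

variable {g : ℝ → ℝ}

theorem mul_sub_le_integral_of_monotoneOn {a r t : ℝ} (hg : MonotoneOn g (Ioi a))
    (hr : a ≤ r) (ht : a < t) (hint : IntervalIntegrable g volume t r) :
    g t * (r - t) ≤ ∫ x in t..r, g x := by
  have hconst : ∫ _ in t..r, g t = g t * (r - t) := by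
    rw [intervalIntegral.integral_const, smul_eq_mul, mul_comm]
  rw [← hconst]
  rcases le_total t r with htr | hrt
  · exact intervalIntegral.integral_mono_on htr intervalIntegrable_const hint
      fun x hx => hg ht (ht.trans_le hx.1) hx.1
  · rw [intervalIntegral.integral_symm r t, intervalIntegral.integral_symm r t, neg_le_neg_iff]
    exact intervalIntegral.integral_mono_on_of_le_Ioo hrt hint.symm intervalIntegrable_const
      fun x hx => hg (hr.trans_lt hx.1) ht hx.2.le

theorem isMaxOn_mul_sub_integral_of_monotoneOn {t : ℝ} (hg : MonotoneOn g (Ioi 0))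
    (hint : ∀ r, 0 ≤ r → IntervalIntegrable g volume 0 r) (ht : 0 < t) :
    IsMaxOn (fun r => g t * r - ∫ x in (0 : ℝ)..r, g x) (Ici 0) t := by
  refine isMaxOn_iff.2 fun r (hr : 0 ≤ r) => ?_
  have htangent : g t * (r - t) ≤ ∫ x in t..r, g x :=
    mul_sub_le_integral_of_monotoneOn hg hr ht ((hint t ht.le).symm.trans (hint r hr))
  rw [← intervalIntegral.integral_interval_sub_left (hint r hr) (hint t ht.le)] at htangent
  linarith

theorem intervalIntegrable_zero_of_monotoneOn (hg : MonotoneOn g (Ioi 0))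
    (hnonneg : MapsTo g (Ioi 0) (Ici 0)) {t : ℝ} (ht : 0 ≤ t) :
    IntervalIntegrable g volume 0 t := by
  have hsub : uIoc 0 t ⊆ Ioi 0 := uIoc_of_le ht ▸ Ioc_subset_Ioi_self
  exact intervalIntegrable_of_monotoneOn_uIoc (hg.mono hsub)
    ⟨0, forall_mem_image.2 fun x hx => hnonneg (hsub hx)⟩

theorem youngComplement_integral_apply (hg : MonotoneOn g (Ioi 0))
    (hnonneg : MapsTo g (Ioi 0) (Ici 0)) {t : ℝ} (ht : 0 < t) :
    youngComplement (fun r => ∫ x in (0 : ℝ)..r, g x) (g t) =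
      g t * t - ∫ x in (0 : ℝ)..t, g x :=
  youngComplement_eq_of_isMaxOn ht.le <| isMaxOn_mul_sub_integral_of_monotoneOn hg
    (fun _ => intervalIntegrable_zero_of_monotoneOn hg hnonneg) ht

theorem hasDerivAt_youngComplement_integral (hg : MonotoneOn g (Ioi 0))
    (hbij : BijOn g (Ioi 0) (Ioi 0)) {t : ℝ} (ht : 0 < t) :
    HasDerivAt (youngComplement fun r => ∫ x in (0 : ℝ)..r, g x) t (g t) := by
  set φ := Function.invFunOn g (Ioi 0)
  have hinv : InvOn φ g (Ioi 0) (Ioi 0) := hbij.invOn_invFunOn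
  have hφ_pos : MapsTo φ (Ioi 0) (Ioi 0) := hbij.surjOn.mapsTo_invFunOn
  have hφt : φ (g t) = t := hinv.1 ht
  have hnhds : Ioi 0 ∈ 𝓝 (g t) := Ioi_mem_nhds (hbij.mapsTo ht)
  have hcont : ContinuousAt φ (g t) := continuousAt_of_invOn_of_monotoneOn hg hinv hbij.mapsTo
    hφ_pos hnhds (by rw [hφt]; exact Ioi_mem_nhds ht)
  have hnonneg : MapsTo g (Ioi 0) (Ici 0) := hbij.mapsTo.mono_right Ioi_subset_Ici_self
  have hmax : ∀ y, 0 < y →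
      IsMaxOn (fun r => y * r - ∫ x in (0 : ℝ)..r, g x) (Ici 0) (φ y) := fun y hy => by
    simpa only [hinv.2 hy] using isMaxOn_mul_sub_integral_of_monotoneOn hg
      (fun _ => intervalIntegrable_zero_of_monotoneOn hg hnonneg) (hφ_pos hy)
  simpa only [hφt] using hasDerivAt_youngComplement_of_isMaxOn hcont
    (eventually_of_mem hnhds fun _ hy => (hφ_pos hy).le) (eventually_of_mem hnhds hmax)

end MonotoneDensity

section PowerGrowth

variable {g g' : ℝ → ℝ} {p q : ℝ}

theorem monotoneOn_div_rpow_of_mul_le_mul_deriv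
    (hderiv : ∀ s, 0 < s → HasDerivAt g (g' s) s)
    (hle : ∀ s, 0 < s → p * g s ≤ s * g' s) :
    MonotoneOn (fun r => g r / r ^ p) (Ioi 0) := by
  have hquot : ∀ x : ℝ, 0 < x → HasDerivAt (fun r => g r / r ^ p)
      ((g' x * x ^ p - g x * (p * x ^ (p - 1))) / (x ^ p) ^ 2) x := fun x hx =>
    (hderiv x hx).div (hasDerivAt_rpow_const (Or.inl hx.ne')) (rpow_pos_of_pos hx p).ne'
  refine monotoneOn_of_hasDerivWithinAt_nonneg (convex_Ioi 0)
    (fun x hx => (hquot x hx).continuousAt.continuousWithinAt)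
    (fun x hx => (hquot x (interior_subset hx)).hasDerivWithinAt) fun x hx => ?_
  replace hx : 0 < x := interior_subset hx
  have hnum : g' x * x ^ p - g x * (p * x ^ (p - 1)) =
      x ^ (p - 1) * (x * g' x - p * g x) := by
    rw [rpow_sub_one hx.ne']
    field_simp
  rw [hnum]
  have := hle x hx
  exact div_nonneg (mul_nonneg (rpow_nonneg hx.le _) (sub_nonneg.2 this)) (sq_nonneg _)

theorem antitoneOn_div_rpow_of_mul_deriv_le_mul
    (hderiv : ∀ s, 0 < s → HasDerivAt g (g' s) s)
    (hle : ∀ s, 0 < s → s * g' s ≤ q * g s) :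
    AntitoneOn (fun r => g r / r ^ q) (Ioi 0) := by
  have hneg : MonotoneOn (fun r => -g r / r ^ q) (Ioi 0) :=
    monotoneOn_div_rpow_of_mul_le_mul_deriv (fun s hs => (hderiv s hs).neg)
      fun s hs => by linarith [hle s hs]
  simpa only [neg_div, neg_neg] using hneg.neg

theorem le_div_rpow_mul_rpow (hmono : MonotoneOn (fun r => g r / r ^ p) (Ioi 0))
    {r t : ℝ} (hr : 0 < r) (hrt : r ≤ t) : g r ≤ g t / t ^ p * r ^ p :=
  (div_le_iff₀ (rpow_pos_of_pos hr p)).1 (hmono hr (hr.trans_le hrt) hrt)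

theorem div_rpow_mul_rpow_le (hmono : MonotoneOn (fun r => g r / r ^ p) (Ioi 0))
    {r t : ℝ} (ht : 0 < t) (htr : t ≤ r) : g t / t ^ p * r ^ p ≤ g r :=
  (le_div_iff₀ (rpow_pos_of_pos (ht.trans_le htr) p)).1 (hmono ht (ht.trans_le htr) htr)

theorem strictMonoOn_of_monotoneOn_div_rpow (hp : 0 < p) (hpos : MapsTo g (Ioi 0) (Ioi 0))
    (hmono : MonotoneOn (fun r => g r / r ^ p) (Ioi 0)) : StrictMonoOn g (Ioi 0) := by
  intro r (hr : 0 < r) t (ht : 0 < t) hrt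
  have htp : 0 < t ^ p := rpow_pos_of_pos ht p
  calc g r ≤ g t / t ^ p * r ^ p := le_div_rpow_mul_rpow hmono hr hrt.le
    _ < g t / t ^ p * t ^ p :=
      mul_lt_mul_of_pos_left (rpow_lt_rpow hr.le hrt hp) (div_pos (hpos ht) htp)
    _ = g t := div_mul_cancel₀ _ htp.ne'

theorem continuousAt_of_monotoneOn_of_antitoneOn_div_rpow
    (hmono : MonotoneOn (fun r => g r / r ^ p) (Ioi 0))
    (hanti : AntitoneOn (fun r => g r / r ^ q) (Ioi 0)) {t : ℝ} (ht : 0 < t) :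
    ContinuousAt g t := by
  have hpower (c : ℝ) : Tendsto (fun r => g t / t ^ c * r ^ c) (𝓝 t) (𝓝 (g t)) := by
    have := (continuousAt_rpow_const t c (Or.inl ht.ne')).tendsto.const_mul (g t / t ^ c)
    rwa [div_mul_cancel₀ _ (rpow_pos_of_pos ht c).ne'] at this
  have hmin := (hpower p).min (hpower q)
  have hmax := (hpower p).max (hpower q)
  rw [min_self] at hmin
  rw [max_self] at hmax
  refine tendsto_of_tendsto_of_tendsto_of_le_of_le' hmin hmax ?_ ?_ <;>
    filter_upwards [Ioi_mem_nhds ht] with r (hr : 0 < r) <;>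
    have hrq := rpow_pos_of_pos hr q <;>
    rcases le_total r t with hrt | htr
  · exact min_le_of_right_le ((le_div_iff₀ hrq).1 (hanti hr ht hrt))
  · exact min_le_of_left_le (div_rpow_mul_rpow_le hmono ht htr)
  · exact le_max_of_le_left (le_div_rpow_mul_rpow hmono hr hrt)
  · exact le_max_of_le_right ((div_le_iff₀ hrq).1 (hanti ht hr htr))

theorem tendsto_nhdsGT_zero_of_monotoneOn_div_rpow (hp : 0 < p)
    (hnonneg : MapsTo g (Ioi 0) (Ici 0)) (hmono : MonotoneOn (fun r => g r / r ^ p) (Ioi 0)) :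
    Tendsto g (𝓝[>] 0) (𝓝 0) := by
  have hpower : Tendsto (fun r : ℝ => g 1 / 1 ^ p * r ^ p) (𝓝[>] 0) (𝓝 0) := by
    have := (continuousAt_rpow_const 0 p (Or.inr hp.le)).tendsto.const_mul (g 1 / 1 ^ p)
    rw [zero_rpow hp.ne', mul_zero] at this
    exact this.mono_left nhdsWithin_le_nhds
  refine squeeze_zero' ?_ ?_ hpower
  · filter_upwards [self_mem_nhdsWithin] with r hr using hnonneg hr
  · filter_upwards [Ioc_mem_nhdsGT one_pos] with r hr
    exact le_div_rpow_mul_rpow hmono hr.1 hr.2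

theorem tendsto_atTop_of_monotoneOn_div_rpow (hp : 0 < p) (hg_one : 0 < g 1)
    (hmono : MonotoneOn (fun r => g r / r ^ p) (Ioi 0)) : Tendsto g atTop atTop := by
  have hcoeff : 0 < g 1 / 1 ^ p := div_pos hg_one (rpow_pos_of_pos one_pos p)
  refine tendsto_atTop_mono' _ ?_ ((tendsto_rpow_atTop hp).const_mul_atTop hcoeff)
  filter_upwards [eventually_ge_atTop 1] with r hr
  exact div_rpow_mul_rpow_le hmono one_pos hr

theorem bijOn_Ioi_of_monotoneOn_div_rpow (hp : 0 < p) (hpos : MapsTo g (Ioi 0) (Ioi 0))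
    (hmono : MonotoneOn (fun r => g r / r ^ p) (Ioi 0)) (hcont : ContinuousOn g (Ioi 0)) :
    BijOn g (Ioi 0) (Ioi 0) :=
  ⟨hpos, (strictMonoOn_of_monotoneOn_div_rpow hp hpos hmono).injOn,
    isPreconnected_Ioi.intermediate_value_Ioi (l₁ := 𝓝[>] 0) inf_le_right
      (le_principal_iff.2 (Ioi_mem_atTop 0)) hcont
      (tendsto_nhdsGT_zero_of_monotoneOn_div_rpow hp (hpos.mono_right Ioi_subset_Ici_self) hmono)
      (tendsto_atTop_of_monotoneOn_div_rpow hp (hpos (mem_Ioi.2 one_pos)) hmono)⟩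

theorem mul_integral_le_of_monotoneOn_div_rpow (hp : -1 < p)
    (hmono : MonotoneOn (fun r => g r / r ^ p) (Ioi 0)) {t : ℝ} (ht : 0 < t)
    (hint : IntervalIntegrable g volume 0 t) :
    (p + 1) * ∫ x in (0 : ℝ)..t, g x ≤ t * g t := by
  have hp1 : 0 < p + 1 := by linarith
  have htp : t ^ p ≠ 0 := (rpow_pos_of_pos ht p).ne'
  rw [mul_comm, ← le_div_iff₀ hp1]
  calc ∫ x in (0 : ℝ)..t, g x ≤ ∫ x in (0 : ℝ)..t, g t / t ^ p * x ^ p :=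
        intervalIntegral.integral_mono_on_of_le_Ioo ht.le hint
          ((intervalIntegral.intervalIntegrable_rpow' hp).const_mul _)
          fun _ hx => le_div_rpow_mul_rpow hmono hx.1 hx.2.le
    _ = g t / t ^ p * (t ^ (p + 1) / (p + 1)) := by
        rw [intervalIntegral.integral_const_mul, integral_rpow (Or.inl hp),
          zero_rpow hp1.ne', sub_zero]
    _ = t * g t / (p + 1) := by
        rw [rpow_add_one ht.ne']
        field_simp

theorem le_mul_integral_of_antitoneOn_div_rpow (hq : -1 < q)
    (hanti : AntitoneOn (fun r => g r / r ^ q) (Ioi 0)) {t : ℝ} (ht : 0 < t)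
    (hint : IntervalIntegrable g volume 0 t) :
    t * g t ≤ (q + 1) * ∫ x in (0 : ℝ)..t, g x := by
  have hneg : MonotoneOn (fun r => -g r / r ^ q) (Ioi 0) := by
    simpa only [neg_div] using hanti.neg
  have hle := mul_integral_le_of_monotoneOn_div_rpow hq hneg ht hint.neg
  rw [intervalIntegral.integral_neg] at hle
  linarith

end PowerGrowth

theorem orlicz_condition_for_young_complement_general {g₀ g₁ : ℝ} (hg₀ : 1 < g₀) (hg01 : g₀ ≤ g₁)
    {g : ℝ → ℝ} (hpos : MapsTo g (Ioi 0) (Ioi 0))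
    (hmono : MonotoneOn (fun r => g r / r ^ (g₀ - 1)) (Ioi 0))
    (hanti : AntitoneOn (fun r => g r / r ^ (g₁ - 1)) (Ioi 0)) {s : ℝ} (hs : 0 < s) :
    ∃ d : ℝ, HasDerivAt (youngComplement fun r => ∫ x in (0 : ℝ)..r, g x) d s ∧
      g₁ / (g₁ - 1) * youngComplement (fun r => ∫ x in (0 : ℝ)..r, g x) s ≤ s * d ∧
      s * d ≤ g₀ / (g₀ - 1) * youngComplement (fun r => ∫ x in (0 : ℝ)..r, g x) s := by
  have hp : 0 < g₀ - 1 := sub_pos.2 hg₀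
  have hq : 0 < g₁ - 1 := by linarith
  have hcont : ContinuousOn g (Ioi 0) := continuousOn_of_forall_continuousAt fun _ ht =>
    continuousAt_of_monotoneOn_of_antitoneOn_div_rpow hmono hanti ht
  have hbij := bijOn_Ioi_of_monotoneOn_div_rpow hp hpos hmono hcont
  have hg : MonotoneOn g (Ioi 0) :=
    (strictMonoOn_of_monotoneOn_div_rpow hp hpos hmono).monotoneOn
  have hnonneg : MapsTo g (Ioi 0) (Ici 0) := hpos.mono_right Ioi_subset_Ici_self
  obtain ⟨t, ht, rfl⟩ := hbij.surjOn hs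
  have hint := intervalIntegrable_zero_of_monotoneOn hg hnonneg (le_of_lt ht)
  refine ⟨t, hasDerivAt_youngComplement_integral hg hbij ht, ?_, ?_⟩ <;>
    rw [youngComplement_integral_apply hg hnonneg ht, div_mul_eq_mul_div]
  · rw [div_le_iff₀ hq]
    linarith [le_mul_integral_of_antitoneOn_div_rpow (by linarith) hanti ht hint]
  · rw [le_div_iff₀ hp]
    linarith [mul_integral_le_of_monotoneOn_div_rpow (by linarith) hmono ht hint]

/-- The Young complement `G̃` is differentiable on `(0,∞)` and satisfies, for every `s > 0`,
`(g₁/(g₁−1))·G̃(s) ≤ s·G̃′(s) ≤ (g₀/(g₀−1))·G̃(s)`. -/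
theorem orlicz_condition_for_young_complement
    (g₀ g₁ : ℝ) (hg₀ : 1 < g₀) (hg01 : g₀ ≤ g₁)
    (g g' : ℝ → ℝ)
    (hg_pos : ∀ s, 0 < s → 0 < g s)
    (hg_deriv : ∀ s, 0 < s → HasDerivAt g (g' s) s)
    (hg'_cont : ContinuousOn g' (Set.Ioi 0))
    (hOrlicz : ∀ s, 0 < s → (g₀ - 1) * g s ≤ s * g' s ∧ s * g' s ≤ (g₁ - 1) * g s)
    (G : ℝ → ℝ) (hG : ∀ s, G s = ∫ r in (0:ℝ)..s, g r)
    (Gt : ℝ → ℝ) (hGt : ∀ s, Gt s = sSup ((fun r => s * r - G r) '' Set.Ici 0)) :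
    ∀ s, 0 < s → ∃ d : ℝ, HasDerivAt Gt d s ∧
      (g₁ / (g₁ - 1)) * Gt s ≤ s * d ∧ s * d ≤ (g₀ / (g₀ - 1)) * Gt s := by
  obtain rfl : G = fun s => ∫ r in (0 : ℝ)..s, g r := funext hG
  obtain rfl : Gt = youngComplement _ := funext hGt
  exact fun s hs => orlicz_condition_for_young_complement_general hg₀ hg01 hg_pos
    (monotoneOn_div_rpow_of_mul_le_mul_deriv hg_deriv fun s hs => (hOrlicz s hs).1)
    (antitoneOn_div_rpow_of_mul_deriv_le_mul hg_deriv fun s hs => (hOrlicz s hs).2) hs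
end

section
/- (Strict monotonicity) There exists a constant c > 0, depending only on g₀, g₁ and ν, such that for all ξ₁, ξ₂ ∈ ℝⁿ with |ξ₁| + |ξ₂| > 0 one has ⟨𝒜(ξ₁) − 𝒜(ξ₂), ξ₁ − ξ₂⟩ ≥ c·g′(|ξ₁| + |ξ₂|)·|ξ₁ − ξ₂|². -/
open Real MeasureTheory Set Filter
open scoped RealInnerProductSpace

/-!
Along the segment `γ` from `ξ₂` to `ξ₁`, the function `t ↦ ⟪A (γ t), ξ₁ - ξ₂⟫` has derivative
`⟪A' (γ t) (ξ₁ - ξ₂), ξ₁ - ξ₂⟫ ≥ ν * (g ‖γ t‖ / ‖γ t‖) * ‖ξ₁ - ξ₂‖ ^ 2 ≥ 0`, except where `γ`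
meets the origin, and continuity makes it monotone through that single point. If `ξ₁` is the longer
vector, then on the last quarter of the segment `‖γ t‖` lies between `S / 4` and
`S = ‖ξ₁‖ + ‖ξ₂‖`. Since `s * g' s ≤ p * g s` makes `g s / s ^ p` nonincreasing, there
`g ‖γ t‖ / ‖γ t‖ ≥ 4⁻ᵖ * g S / S ≥ 4⁻ᵖ * g' S / p`, and integrating over that quarter is enough.
-/

section Growth

variable {g g' : ℝ → ℝ} {p : ℝ}

lemma antitoneOn_div_rpow_of_mul_deriv_le (hg : ∀ s, 0 < s → HasDerivAt g (g' s) s)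
    (hgp : ∀ s, 0 < s → s * g' s ≤ p * g s) :
    AntitoneOn (fun s => g s / s ^ p) (Ioi 0) := by
  have hderiv (s : ℝ) (hs : 0 < s) : HasDerivAt (fun s => g s / s ^ p)
      ((g' s * s ^ p - g s * (p * s ^ (p - 1))) / (s ^ p) ^ 2) s :=
    (hg s hs).div (hasDerivAt_rpow_const (.inl hs.ne')) (rpow_pos_of_pos hs p).ne'
  refine antitoneOn_of_hasDerivWithinAt_nonpos (convex_Ioi 0)
    (fun s hs => (hderiv s hs).continuousAt.continuousWithinAt)
    (fun s hs => (hderiv s (interior_subset hs)).hasDerivWithinAt) fun s hs => ?_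
  replace hs : 0 < s := interior_subset hs
  refine div_nonpos_of_nonpos_of_nonneg ?_ (sq_nonneg _)
  calc g' s * s ^ p - g s * (p * s ^ (p - 1))
      = (s * g' s - p * g s) * s ^ (p - 1) := by
        rw [rpow_sub_one hs.ne']
        field_simp
    _ ≤ 0 := mul_nonpos_of_nonpos_of_nonneg (sub_nonpos.2 (hgp s hs)) (rpow_nonneg hs.le _)

lemma div_rpow_mul_le_of_mul_deriv_le (hg : ∀ s, 0 < s → HasDerivAt g (g' s) s)
    (hgp : ∀ s, 0 < s → s * g' s ≤ p * g s) {r S : ℝ} (hr : 0 < r) (hrS : r ≤ S) :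
    (r / S) ^ p * g S ≤ g r := by
  have hS : 0 < S := hr.trans_le hrS
  have hanti : g S / S ^ p ≤ g r / r ^ p :=
    antitoneOn_div_rpow_of_mul_deriv_le hg hgp hr hS hrS
  calc (r / S) ^ p * g S = g S / S ^ p * r ^ p := by
        rw [div_rpow hr.le hS.le]
        ring
    _ ≤ g r := (le_div_iff₀ (rpow_pos_of_pos hr p)).1 hanti

lemma rpow_mul_div_le_div_of_mul_deriv_le (hg₀ : ∀ s, 0 < s → 0 ≤ g s)
    (hg : ∀ s, 0 < s → HasDerivAt g (g' s) s) (hp : 0 ≤ p)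
    (hgp : ∀ s, 0 < s → s * g' s ≤ p * g s) {c r S : ℝ} (hc : 0 ≤ c) (hr : 0 < r)
    (hcr : c * S ≤ r) (hrS : r ≤ S) :
    c ^ p * (g S / S) ≤ g r / r := by
  have hS : 0 < S := hr.trans_le hrS
  have hgS : 0 ≤ g S := hg₀ S hS
  have hcrS : c ≤ r / S := (le_div_iff₀ hS).2 hcr
  calc c ^ p * (g S / S) ≤ (r / S) ^ p * (g S / S) := by gcongr
    _ = (r / S) ^ p * g S / S := (mul_div_assoc _ _ _).symm
    _ ≤ g r / S := by
        gcongr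
        exact div_rpow_mul_le_of_mul_deriv_le hg hgp hr hrS
    _ ≤ g r / r := div_le_div_of_nonneg_left (hg₀ r hr) hr hrS

end Growth

lemma monotone_of_hasDerivAt_nonneg_of_ne {f f' : ℝ → ℝ} {a : ℝ} (hf : Continuous f)
    (hf' : ∀ t, t ≠ a → HasDerivAt f (f' t) t) (hf'₀ : ∀ t, t ≠ a → 0 ≤ f' t) : Monotone f := by
  refine MonotoneOn.Iic_union_Ici (a := a) ?_ ?_
  · have hne {t : ℝ} (ht : t ∈ interior (Iic a)) : t ≠ a := by
      rw [interior_Iic] at ht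
      exact ht.ne
    exact monotoneOn_of_hasDerivWithinAt_nonneg (convex_Iic a) hf.continuousOn
      (fun t ht => (hf' t (hne ht)).hasDerivWithinAt) fun t ht => hf'₀ t (hne ht)
  · have hne {t : ℝ} (ht : t ∈ interior (Ici a)) : t ≠ a := by
      rw [interior_Ici] at ht
      exact ht.ne'
    exact monotoneOn_of_hasDerivWithinAt_nonneg (convex_Ici a) hf.continuousOn
      (fun t ht => (hf' t (hne ht)).hasDerivWithinAt) fun t ht => hf'₀ t (hne ht)

section Segment

variable {E : Type*} [SeminormedAddCommGroup E] [NormedSpace ℝ E] {t : ℝ}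

lemma norm_lineMap_le_add (x y : E) (ht : t ∈ Icc (0 : ℝ) 1) :
    ‖AffineMap.lineMap x y t‖ ≤ ‖x‖ + ‖y‖ := by
  obtain ⟨ht₀, ht₁⟩ := ht
  calc ‖AffineMap.lineMap x y t‖ = ‖(1 - t) • x + t • y‖ := by
        rw [AffineMap.lineMap_apply_module]
    _ ≤ (1 - t) * ‖x‖ + t * ‖y‖ := by
        simpa only [norm_smul_of_nonneg (sub_nonneg.2 ht₁), norm_smul_of_nonneg ht₀]
          using norm_add_le ((1 - t) • x) (t • y)
    _ ≤ ‖x‖ + ‖y‖ := add_le_add (mul_le_of_le_one_left (norm_nonneg x) (by linarith))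
        (mul_le_of_le_one_left (norm_nonneg y) ht₁)

lemma mul_add_norm_le_norm_lineMap {x y : E} (hxy : ‖x‖ ≤ ‖y‖) (ht : t ∈ Icc (0 : ℝ) 1) :
    (t - 1 / 2) * (‖x‖ + ‖y‖) ≤ ‖AffineMap.lineMap x y t‖ := by
  obtain ⟨ht₀, ht₁⟩ := ht
  calc (t - 1 / 2) * (‖x‖ + ‖y‖) ≤ t * ‖y‖ - (1 - t) * ‖x‖ := by linarith
    _ ≤ ‖t • y + (1 - t) • x‖ := by
        simpa only [norm_smul_of_nonneg (sub_nonneg.2 ht₁), norm_smul_of_nonneg ht₀]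
          using norm_sub_le_norm_add (t • y) ((1 - t) • x)
    _ = ‖AffineMap.lineMap x y t‖ := by rw [AffineMap.lineMap_apply_module, add_comm]

end Segment

section VectorField

variable {E : Type*} [NormedAddCommGroup E] [InnerProductSpace ℝ E]
  {A : E → E} {A' : E → E →L[ℝ] E} {x y z : E}

lemma hasDerivAt_inner_lineMap {t : ℝ}
    (hA : HasFDerivAt A (A' (AffineMap.lineMap x y t)) (AffineMap.lineMap x y t)) :
    HasDerivAt (fun t : ℝ => ⟪A (AffineMap.lineMap x y t), y - x⟫)
      ⟪A' (AffineMap.lineMap x y t) (y - x), y - x⟫ t := by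
  simpa using (hA.comp_hasDerivAt t AffineMap.hasDerivAt_lineMap).inner ℝ
    (hasDerivAt_const t (y - x))

lemma monotone_inner_lineMap (hA : Continuous A) (hA' : ∀ ξ, ξ ≠ z → HasFDerivAt A (A' ξ) ξ)
    (hpos : ∀ ξ, ξ ≠ z → ∀ ζ, 0 ≤ ⟪A' ξ ζ, ζ⟫) (x y : E) :
    Monotone fun t : ℝ => ⟪A (AffineMap.lineMap x y t), y - x⟫ := by
  rcases eq_or_ne x y with rfl | hxy
  · simpa using monotone_const
  obtain ⟨a, ha⟩ : ∃ a : ℝ, ∀ t, t ≠ a → AffineMap.lineMap x y t ≠ z := by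
    by_cases h : ∃ a : ℝ, AffineMap.lineMap x y a = z
    · obtain ⟨a, rfl⟩ := h
      exact ⟨a, fun t => (AffineMap.lineMap_injective ℝ hxy).ne⟩
    · exact ⟨0, fun t _ hz => h ⟨t, hz⟩⟩
  exact monotone_of_hasDerivAt_nonneg_of_ne (by fun_prop)
    (fun t ht => hasDerivAt_inner_lineMap (hA' _ (ha t ht))) fun t ht => hpos _ (ha t ht) _

lemma mul_one_sub_le_inner_sub (hA : Continuous A) (hA' : ∀ ξ, ξ ≠ z → HasFDerivAt A (A' ξ) ξ)
    (hpos : ∀ ξ, ξ ≠ z → ∀ ζ, 0 ≤ ⟪A' ξ ζ, ζ⟫) {m s : ℝ} (hs : s ∈ Icc (0 : ℝ) 1)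
    (hz : ∀ t ∈ Ioo s 1, AffineMap.lineMap x y t ≠ z)
    (hm : ∀ t ∈ Ioo s 1, m ≤ ⟪A' (AffineMap.lineMap x y t) (y - x), y - x⟫) :
    m * (1 - s) ≤ ⟪A y - A x, y - x⟫ := by
  set φ : ℝ → ℝ := fun t => ⟪A (AffineMap.lineMap x y t), y - x⟫
  have hφ : Continuous φ := by fun_prop
  have hderiv (t : ℝ) (ht : t ∈ interior (Icc s 1)) :
      HasDerivAt φ ⟪A' (AffineMap.lineMap x y t) (y - x), y - x⟫ t := by
    rw [interior_Icc] at ht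
    exact hasDerivAt_inner_lineMap (hA' _ (hz t ht))
  have hstart : φ 0 ≤ φ s := monotone_inner_lineMap hA hA' hpos x y hs.1
  have hend : m * (1 - s) ≤ φ 1 - φ s :=
    (convex_Icc s 1).mul_sub_le_image_sub_of_le_deriv hφ.continuousOn
      (fun t ht => (hderiv t ht).differentiableAt.differentiableWithinAt)
      (fun t ht => (hderiv t ht).deriv ▸ hm t (interior_Icc (a := s) ▸ ht))
      s (left_mem_Icc.2 hs.2) 1 (right_mem_Icc.2 hs.2) hs.2
  calc m * (1 - s) ≤ φ 1 - φ 0 := by linarith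
    _ = ⟪A y - A x, y - x⟫ := by simp [φ, inner_sub_left]

variable {g g' : ℝ → ℝ} {p ν : ℝ}

lemma mul_norm_sub_sq_le_inner_sub_of_norm_le (hp : 0 ≤ p) (hν : 0 ≤ ν)
    (hg₀ : ∀ s, 0 < s → 0 ≤ g s) (hg : ∀ s, 0 < s → HasDerivAt g (g' s) s)
    (hgp : ∀ s, 0 < s → s * g' s ≤ p * g s)
    (hA : Continuous A) (hA' : ∀ ξ, ξ ≠ 0 → HasFDerivAt A (A' ξ) ξ)
    (hell : ∀ ξ, ξ ≠ 0 → ∀ ζ, ν * (g ‖ξ‖ / ‖ξ‖) * ‖ζ‖ ^ 2 ≤ ⟪A' ξ ζ, ζ⟫)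
    (hS : 0 < ‖x‖ + ‖y‖) (hxy : ‖x‖ ≤ ‖y‖) :
    ν * (1 / 4) ^ p / 4 * (g (‖x‖ + ‖y‖) / (‖x‖ + ‖y‖)) * ‖y - x‖ ^ 2
      ≤ ⟪A y - A x, y - x⟫ := by
  set S := ‖x‖ + ‖y‖
  have hpos (ξ : E) (hξ : ξ ≠ 0) (ζ : E) : 0 ≤ ⟪A' ξ ζ, ζ⟫ := by
    have := hg₀ _ (norm_pos_iff.2 hξ)
    exact le_trans (by positivity) (hell ξ hξ ζ)
  have hIcc {t : ℝ} (ht : t ∈ Ioo (3 / 4 : ℝ) 1) : t ∈ Icc (0 : ℝ) 1 :=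
    ⟨by linarith [ht.1], ht.2.le⟩
  have hlower {t : ℝ} (ht : t ∈ Ioo (3 / 4 : ℝ) 1) :
      1 / 4 * S ≤ ‖AffineMap.lineMap x y t‖ :=
    (mul_le_mul_of_nonneg_right (by linarith [ht.1]) hS.le).trans
      (mul_add_norm_le_norm_lineMap hxy (hIcc ht))
  have hnorm {t : ℝ} (ht : t ∈ Ioo (3 / 4 : ℝ) 1) : 0 < ‖AffineMap.lineMap x y t‖ :=
    lt_of_lt_of_le (by positivity) (hlower ht)
  calc ν * (1 / 4) ^ p / 4 * (g S / S) * ‖y - x‖ ^ 2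
      = ν * ((1 / 4) ^ p * (g S / S)) * ‖y - x‖ ^ 2 * (1 - 3 / 4) := by ring
    _ ≤ ⟪A y - A x, y - x⟫ := by
      refine mul_one_sub_le_inner_sub hA hA' hpos (by norm_num)
        (fun t ht => norm_pos_iff.1 (hnorm ht)) fun t ht => ?_
      refine le_trans ?_ (hell _ (norm_pos_iff.1 (hnorm ht)) _)
      gcongr
      exact rpow_mul_div_le_div_of_mul_deriv_le hg₀ hg hp hgp (by norm_num) (hnorm ht)
        (hlower ht) (norm_lineMap_le_add x y (hIcc ht))

lemma mul_norm_sub_sq_le_inner_sub (hp : 0 ≤ p) (hν : 0 ≤ ν)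
    (hg₀ : ∀ s, 0 < s → 0 ≤ g s) (hg : ∀ s, 0 < s → HasDerivAt g (g' s) s)
    (hgp : ∀ s, 0 < s → s * g' s ≤ p * g s)
    (hA : Continuous A) (hA' : ∀ ξ, ξ ≠ 0 → HasFDerivAt A (A' ξ) ξ)
    (hell : ∀ ξ, ξ ≠ 0 → ∀ ζ, ν * (g ‖ξ‖ / ‖ξ‖) * ‖ζ‖ ^ 2 ≤ ⟪A' ξ ζ, ζ⟫)
    (hS : 0 < ‖x‖ + ‖y‖) :
    ν * (1 / 4) ^ p / 4 * (g (‖x‖ + ‖y‖) / (‖x‖ + ‖y‖)) * ‖x - y‖ ^ 2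
      ≤ ⟪A x - A y, x - y⟫ := by
  wlog hxy : ‖y‖ ≤ ‖x‖ generalizing x y
  · have hswap := this (add_comm ‖x‖ ‖y‖ ▸ hS) (le_of_not_ge hxy)
    rwa [add_comm ‖y‖, norm_sub_rev, ← neg_sub (A x), ← neg_sub x, inner_neg_neg] at hswap
  rw [add_comm] at hS ⊢
  exact mul_norm_sub_sq_le_inner_sub_of_norm_le hp hν hg₀ hg hgp hA hA' hell hS hxy

theorem strict_monotonicity_of_vector_field_general (hp : 0 < p) (hν : 0 ≤ ν)
    (hg₀ : ∀ s, 0 < s → 0 ≤ g s) (hg : ∀ s, 0 < s → HasDerivAt g (g' s) s)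
    (hgp : ∀ s, 0 < s → s * g' s ≤ p * g s)
    (hA : Continuous A) (hA' : ∀ ξ, ξ ≠ 0 → HasFDerivAt A (A' ξ) ξ)
    (hell : ∀ ξ, ξ ≠ 0 → ∀ ζ, ν * (g ‖ξ‖ / ‖ξ‖) * ‖ζ‖ ^ 2 ≤ ⟪A' ξ ζ, ζ⟫)
    (ξ₁ ξ₂ : E) (hS : 0 < ‖ξ₁‖ + ‖ξ₂‖) :
    ν * (1 / 4) ^ p / (4 * p) * g' (‖ξ₁‖ + ‖ξ₂‖) * ‖ξ₁ - ξ₂‖ ^ 2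
      ≤ ⟪A ξ₁ - A ξ₂, ξ₁ - ξ₂⟫ := by
  refine le_trans ?_ (mul_norm_sub_sq_le_inner_sub hp.le hν hg₀ hg hgp hA hA' hell hS)
  set S := ‖ξ₁‖ + ‖ξ₂‖
  have hg'S : g' S / p ≤ g S / S := by
    rw [div_le_div_iff₀ hp hS]
    linarith [hgp S hS]
  calc ν * (1 / 4) ^ p / (4 * p) * g' S * ‖ξ₁ - ξ₂‖ ^ 2
      = ν * (1 / 4) ^ p / 4 * (g' S / p) * ‖ξ₁ - ξ₂‖ ^ 2 := by field_simp
    _ ≤ ν * (1 / 4) ^ p / 4 * (g S / S) * ‖ξ₁ - ξ₂‖ ^ 2 := by gcongr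

end VectorField

/-- Strict monotonicity: there exists a constant `c > 0`, depending only on `g₀, g₁, ν`,
such that for all `ξ₁, ξ₂` with `|ξ₁| + |ξ₂| > 0`,
`⟨𝒜(ξ₁) − 𝒜(ξ₂), ξ₁ − ξ₂⟩ ≥ c·g′(|ξ₁| + |ξ₂|)·|ξ₁ − ξ₂|²`. -/
theorem strict_monotonicity_of_vector_field
    (g₀ g₁ ν : ℝ) (hg₀ : 1 < g₀) (hg01 : g₀ ≤ g₁) (hν : 0 < ν) (hν1 : ν ≤ 1) :
    ∃ c : ℝ, 0 < c ∧
      ∀ (n : ℕ), 2 ≤ n →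
      ∀ (g g' : ℝ → ℝ),
        (∀ s, 0 < s → 0 < g s) →
        (∀ s, 0 < s → HasDerivAt g (g' s) s) →
        ContinuousOn g' (Set.Ioi 0) →
        (∀ s, 0 < s → (g₀ - 1) * g s ≤ s * g' s ∧ s * g' s ≤ (g₁ - 1) * g s) →
      ∀ (L : ℝ), 1 ≤ L →
      ∀ (A : EuclideanSpace ℝ (Fin n) → EuclideanSpace ℝ (Fin n)),
        ContDiff ℝ 1 A → A 0 = 0 →
        (∀ ξ : EuclideanSpace ℝ (Fin n), ξ ≠ 0 →
          ∀ ζ : EuclideanSpace ℝ (Fin n),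
            ν * (g ‖ξ‖ / ‖ξ‖) * ‖ζ‖ ^ 2 ≤ ⟪fderiv ℝ A ξ ζ, ζ⟫) →
        (∀ ξ : EuclideanSpace ℝ (Fin n), ξ ≠ 0 →
          ‖fderiv ℝ A ξ‖ ≤ L * (g ‖ξ‖ / ‖ξ‖)) →
      ∀ ξ₁ ξ₂ : EuclideanSpace ℝ (Fin n), 0 < ‖ξ₁‖ + ‖ξ₂‖ →
        c * g' (‖ξ₁‖ + ‖ξ₂‖) * ‖ξ₁ - ξ₂‖ ^ 2 ≤ ⟪A ξ₁ - A ξ₂, ξ₁ - ξ₂⟫ := by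
  have hp : 0 < g₁ - 1 := by linarith
  exact ⟨ν * (1 / 4) ^ (g₁ - 1) / (4 * (g₁ - 1)), by positivity,
    fun _ _ _ _ hgpos hg _ hgp _ _ _ hA _ hell _ =>
      strict_monotonicity_of_vector_field_general hp hν.le (fun s hs => (hgpos s hs).le) hg
        (fun s hs => (hgp s hs).2) hA.continuous
        (fun ξ _ => (hA.differentiable one_ne_zero ξ).hasFDerivAt) hell⟩
end

section
/- There exists a constant c > 0, depending only on g₀ and g₁, such that for all ξ₁, ξ₂ ∈ ℝⁿ with |ξ₁| + |ξ₂| > 0 one has |V_g(ξ₁) − V_g(ξ₂)|² ≤ c·g′(|ξ₁| + |ξ₂|)·|ξ₁ − ξ₂|². -/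
open Real MeasureTheory Set Filter

/-!
For `|y| ≤ |x|` write `p = √(g |x| / |x|)` and `q = √(g |y| / |y|)`, so that
`V_g x - V_g y = p (x - y) + (p - q) y`. The function `√(s g(s))` is the norm of `V_g` on the sphere
of radius `s`; since `(s g(s))' ≤ g₁ g(s)` and `g` is increasing, the mean value theorem for
`s g(s)` bounds its increments, which gives `|p - q| |y| ≤ g₁ p (|x| - |y|)` and hence
`|V_g x - V_g y| ≤ (1 + g₁) p |x - y|`. Finally, for `s = |x| + |y|` the bounds `|x| ≤ s ≤ 2 |x|`
and `(g₀ - 1) g(s) ≤ s g'(s)` yield `p² = g |x| / |x| ≤ 2 g(s) / s ≤ 2 g'(s) / (g₀ - 1)`.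
-/

/-- The map `V_g(x) = (g(|x|) / |x|)^{1/2} x`, whose increments are estimated in the Orlicz setting.
No case distinction at the origin is needed, because the junk coefficient `√(g 0 / 0)` multiplies
the zero vector. -/
noncomputable def Vg {E : Type*} [SeminormedAddCommGroup E] [NormedSpace ℝ E] (g : ℝ → ℝ) (x : E) :
    E :=
  √(g ‖x‖ / ‖x‖) • x

lemma eq_Vg {E : Type*} [SeminormedAddCommGroup E] [NormedSpace ℝ E] {g : ℝ → ℝ} {V : E → E}
    (hV₀ : V 0 = 0) (hV : ∀ x, x ≠ 0 → V x = (g ‖x‖ / ‖x‖) ^ ((1 : ℝ) / 2) • x) : V = Vg g := by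
  ext1 x
  rcases eq_or_ne x 0 with rfl | hx
  · rw [hV₀, Vg, smul_zero]
  · rw [hV x hx, Vg, Real.sqrt_eq_rpow]

lemma norm_smul_sub_smul_le {E : Type*} [SeminormedAddCommGroup E] [NormedSpace ℝ E]
    (p q : ℝ) (x y : E) : ‖p • x - q • y‖ ≤ |p| * ‖x - y‖ + |p - q| * ‖y‖ := by
  have hsplit : p • x - q • y = p • (x - y) + (p - q) • y := by module
  simpa only [hsplit, norm_smul, Real.norm_eq_abs] using norm_add_le (p • (x - y)) ((p - q) • y)

lemma sqrt_sub_sqrt_le_sub_div_sqrt {a b : ℝ} (hba : b ≤ a) : √a - √b ≤ (a - b) / √a := by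
  rcases le_or_gt a 0 with ha | ha
  · simp only [Real.sqrt_eq_zero'.2 ha, Real.sqrt_eq_zero'.2 (hba.trans ha), sub_self, div_zero,
      le_refl]
  have hb : b ≤ √b * √a :=
    calc b ≤ √b ^ 2 := (Real.sqrt_le_iff.1 le_rfl).2
      _ = √b * √b := sq _
      _ ≤ √b * √a := by gcongr
  rw [le_div_iff₀ (Real.sqrt_pos.2 ha), sub_mul, Real.mul_self_sqrt ha.le]
  linarith

lemma sqrt_div_mul_self (c : ℝ) {s : ℝ} (hs : 0 < s) : √(c / s) * s = √(s * c) := by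
  rw [show s * c = c / s * s ^ 2 by field_simp, Real.sqrt_mul' _ (sq_nonneg s),
    Real.sqrt_sq hs.le]

lemma div_sqrt_mul_self {c : ℝ} (hc : 0 ≤ c) (s : ℝ) : c / √(s * c) = √(c / s) := by
  rw [Real.sqrt_mul' s hc, Real.sqrt_div hc, div_mul_eq_div_div_swap, Real.div_sqrt]

section RadialProfile

variable {g g' : ℝ → ℝ}

lemma monotoneOn_Ioi_of_hasDerivAt_nonneg {a : ℝ} (hg : ∀ s, a < s → HasDerivAt g (g' s) s)
    (hg' : ∀ s, a < s → 0 ≤ g' s) : MonotoneOn g (Ioi a) := by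
  refine monotoneOn_of_hasDerivWithinAt_nonneg (f' := g') (convex_Ioi a)
    (fun s hs => (hg s hs).continuousAt.continuousWithinAt) ?_ ?_ <;> rw [interior_Ioi]
  exacts [fun s hs => (hg s hs).hasDerivWithinAt, hg']

lemma mul_sub_mul_le_of_mul_deriv_le {k a b : ℝ} (hk : 0 ≤ k)
    (hg : ∀ s, 0 < s → HasDerivAt g (g' s) s) (hmono : MonotoneOn g (Ioi 0))
    (hup : ∀ s, 0 < s → s * g' s ≤ (k - 1) * g s) (hb : 0 < b) (hba : b ≤ a) :
    a * g a - b * g b ≤ k * g a * (a - b) := by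
  have hderiv : ∀ s, 0 < s → HasDerivAt (fun t => t * g t) (1 * g s + s * g' s) s :=
    fun s hs => (hasDerivAt_id s).mul (hg s hs)
  have ha : 0 < a := hb.trans_le hba
  refine (convex_Ioc 0 a).image_sub_le_mul_sub_of_deriv_le
    (fun s hs => (hderiv s hs.1).continuousAt.continuousWithinAt) ?_ ?_
    b ⟨hb, hba⟩ a ⟨ha, le_rfl⟩ hba <;> rw [interior_Ioc] <;> intro s hs
  · exact (hderiv s hs.1).differentiableAt.differentiableWithinAt
  · calc deriv (fun t => t * g t) s = 1 * g s + s * g' s := (hderiv s hs.1).deriv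
      _ ≤ k * g s := by linarith [hup s hs.1]
      _ ≤ k * g a := by gcongr; exact hmono hs.1 ha hs.2.le

lemma abs_sqrt_div_sub_sqrt_div_mul_le {k a b : ℝ} (hk : 1 ≤ k) (hpos : ∀ s, 0 < s → 0 ≤ g s)
    (hg : ∀ s, 0 < s → HasDerivAt g (g' s) s) (hmono : MonotoneOn g (Ioi 0))
    (hup : ∀ s, 0 < s → s * g' s ≤ (k - 1) * g s) (hb : 0 < b) (hba : b ≤ a) :
    |√(g a / a) - √(g b / b)| * b ≤ k * √(g a / a) * (a - b) := by
  have ha : 0 < a := hb.trans_le hba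
  have hle : b * g b ≤ a * g a := mul_le_mul hba (hmono hb ha hba) (hpos b hb) ha.le
  have hprofile_le : √(g b / b) * b ≤ √(g a / a) * a := by
    rw [sqrt_div_mul_self _ ha, sqrt_div_mul_self _ hb]
    exact Real.sqrt_le_sqrt hle
  have hprofile_sub : √(g a / a) * a - √(g b / b) * b ≤ k * √(g a / a) * (a - b) :=
    calc √(g a / a) * a - √(g b / b) * b = √(a * g a) - √(b * g b) := by
          rw [sqrt_div_mul_self _ ha, sqrt_div_mul_self _ hb]
      _ ≤ (a * g a - b * g b) / √(a * g a) := sqrt_sub_sqrt_le_sub_div_sqrt hle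
      _ ≤ k * g a * (a - b) / √(a * g a) := by
          gcongr
          exact mul_sub_mul_le_of_mul_deriv_le (by linarith) hg hmono hup hb hba
      _ = k * √(g a / a) * (a - b) := by
          rw [← div_sqrt_mul_self (hpos a ha) a]; ring
  have hgap : 0 ≤ √(g a / a) * (a - b) := mul_nonneg (Real.sqrt_nonneg _) (sub_nonneg.2 hba)
  rw [← abs_of_pos hb, ← abs_mul, abs_of_pos hb, abs_le]
  constructor
  · linarith [le_mul_of_one_le_left hgap hk]
  · linarith

lemma div_le_two_mul_deriv_div {m a s : ℝ} (hm : 0 < m) (hs : 0 < s)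
    (hsa : s ≤ 2 * a) (hgs : 0 ≤ g s) (hga : g a ≤ g s) (hlow : m * g s ≤ s * g' s) :
    g a / a ≤ 2 * (g' s / m) :=
  calc g a / a ≤ g s / (s / 2) := div_le_div₀ hgs hga (half_pos hs) (by linarith)
    _ = 2 * (g s / s) := by ring
    _ ≤ 2 * (g' s / m) := by
        gcongr 2 * ?_
        rw [div_le_div_iff₀ hs hm]
        linarith

end RadialProfile

section VgEstimates

variable {E : Type*} [SeminormedAddCommGroup E] [NormedSpace ℝ E] {g g' : ℝ → ℝ}

lemma norm_Vg_sub_Vg_le {k : ℝ} (hk : 1 ≤ k) (hpos : ∀ s, 0 < s → 0 ≤ g s)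
    (hg : ∀ s, 0 < s → HasDerivAt g (g' s) s) (hmono : MonotoneOn g (Ioi 0))
    (hup : ∀ s, 0 < s → s * g' s ≤ (k - 1) * g s) {x y : E} (hyx : ‖y‖ ≤ ‖x‖) :
    ‖Vg g x - Vg g y‖ ≤ (1 + k) * √(g ‖x‖ / ‖x‖) * ‖x - y‖ := by
  set p := √(g ‖x‖ / ‖x‖)
  set q := √(g ‖y‖ / ‖y‖)
  have hp₀ : 0 ≤ p := Real.sqrt_nonneg _
  have hcoeff : |p - q| * ‖y‖ ≤ k * p * (‖x‖ - ‖y‖) := by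
    rcases (norm_nonneg y).eq_or_lt with hy | hy
    · rw [← hy]
      simp only [mul_zero, sub_zero]
      positivity
    · exact abs_sqrt_div_sub_sqrt_div_mul_le hk hpos hg hmono hup hy hyx
  calc ‖Vg g x - Vg g y‖ ≤ |p| * ‖x - y‖ + |p - q| * ‖y‖ := norm_smul_sub_smul_le p q x y
    _ ≤ p * ‖x - y‖ + k * p * (‖x‖ - ‖y‖) := by rw [abs_of_nonneg hp₀]; gcongr
    _ ≤ p * ‖x - y‖ + k * p * ‖x - y‖ := by gcongr; exact norm_sub_norm_le x y
    _ = (1 + k) * p * ‖x - y‖ := by ring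

theorem Vg_difference_estimate_general {g₀ g₁ : ℝ} (hg₀ : 1 < g₀) (hpos : ∀ s, 0 < s → 0 < g s)
    (hg : ∀ s, 0 < s → HasDerivAt g (g' s) s)
    (hO : ∀ s, 0 < s → (g₀ - 1) * g s ≤ s * g' s ∧ s * g' s ≤ (g₁ - 1) * g s)
    (x y : E) (hxy : 0 < ‖x‖ + ‖y‖) :
    ‖Vg g x - Vg g y‖ ^ 2 ≤
      2 * (1 + g₁) ^ 2 / (g₀ - 1) * g' (‖x‖ + ‖y‖) * ‖x - y‖ ^ 2 := by
  wlog hyx : ‖y‖ ≤ ‖x‖ generalizing x y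
  · rw [norm_sub_rev (Vg g x), norm_sub_rev x, add_comm ‖x‖]
    exact this y x (by linarith) (le_of_not_ge hyx)
  have hm : 0 < g₀ - 1 := sub_pos.2 hg₀
  have hx : 0 < ‖x‖ := by linarith
  have hg₁ : 1 ≤ g₁ := by
    have : g₀ - 1 ≤ g₁ - 1 := le_of_mul_le_mul_right ((hO _ hx).1.trans (hO _ hx).2) (hpos _ hx)
    linarith
  have hmono : MonotoneOn g (Ioi 0) := monotoneOn_Ioi_of_hasDerivAt_nonneg hg fun s hs =>
    nonneg_of_mul_nonneg_right ((mul_pos hm (hpos s hs)).le.trans (hO s hs).1) hs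
  have hV : ‖Vg g x - Vg g y‖ ≤ (1 + g₁) * √(g ‖x‖ / ‖x‖) * ‖x - y‖ :=
    norm_Vg_sub_Vg_le hg₁ (fun s hs => (hpos s hs).le) hg hmono (fun s hs => (hO s hs).2) hyx
  have hcoeff : g ‖x‖ / ‖x‖ ≤ 2 * (g' (‖x‖ + ‖y‖) / (g₀ - 1)) :=
    div_le_two_mul_deriv_div hm hxy (by linarith) (hpos _ hxy).le
      (hmono hx hxy (le_add_of_nonneg_right (norm_nonneg y))) (hO _ hxy).1
  calc ‖Vg g x - Vg g y‖ ^ 2 ≤ ((1 + g₁) * √(g ‖x‖ / ‖x‖) * ‖x - y‖) ^ 2 := by gcongr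
    _ = (1 + g₁) ^ 2 * (g ‖x‖ / ‖x‖) * ‖x - y‖ ^ 2 := by
        rw [mul_pow, mul_pow, Real.sq_sqrt (div_pos (hpos _ hx) hx).le]
    _ ≤ (1 + g₁) ^ 2 * (2 * (g' (‖x‖ + ‖y‖) / (g₀ - 1))) * ‖x - y‖ ^ 2 := by gcongr
    _ = 2 * (1 + g₁) ^ 2 / (g₀ - 1) * g' (‖x‖ + ‖y‖) * ‖x - y‖ ^ 2 := by ring

end VgEstimates

/-- There exists a constant `c > 0`, depending only on `g₀` and `g₁`, such that for all
`ξ₁, ξ₂` with `|ξ₁| + |ξ₂| > 0`, `|V_g(ξ₁) − V_g(ξ₂)|² ≤ c·g′(|ξ₁| + |ξ₂|)·|ξ₁ − ξ₂|²`,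
where `V_g(ξ) = (g(|ξ|)/|ξ|)^{1/2}·ξ` for `ξ ≠ 0` and `V_g(0) = 0`. -/
theorem Vg_difference_estimate
    (g₀ g₁ : ℝ) (hg₀ : 1 < g₀) (hg01 : g₀ ≤ g₁) :
    ∃ c : ℝ, 0 < c ∧
      ∀ (n : ℕ), 2 ≤ n →
      ∀ (g g' : ℝ → ℝ),
        (∀ s, 0 < s → 0 < g s) →
        (∀ s, 0 < s → HasDerivAt g (g' s) s) →
        ContinuousOn g' (Set.Ioi 0) →
        (∀ s, 0 < s → (g₀ - 1) * g s ≤ s * g' s ∧ s * g' s ≤ (g₁ - 1) * g s) →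
      ∀ (V : EuclideanSpace ℝ (Fin n) → EuclideanSpace ℝ (Fin n)),
        V 0 = 0 →
        (∀ ξ : EuclideanSpace ℝ (Fin n), ξ ≠ 0 →
          V ξ = (g ‖ξ‖ / ‖ξ‖) ^ ((1:ℝ)/2) • ξ) →
      ∀ ξ₁ ξ₂ : EuclideanSpace ℝ (Fin n), 0 < ‖ξ₁‖ + ‖ξ₂‖ →
        ‖V ξ₁ - V ξ₂‖ ^ 2 ≤ c * g' (‖ξ₁‖ + ‖ξ₂‖) * ‖ξ₁ - ξ₂‖ ^ 2 := by
  have hg₁ : 0 < 1 + g₁ := by linarith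
  refine ⟨2 * (1 + g₁) ^ 2 / (g₀ - 1), div_pos (by positivity) (sub_pos.2 hg₀), ?_⟩
  intro n _ g g' hpos hg _ hO V hV₀ hV ξ₁ ξ₂ hξ
  rw [eq_Vg hV₀ hV]
  exact Vg_difference_estimate_general hg₀ hpos hg hO ξ₁ ξ₂ hξ
end

section
/- (Poincaré's inequality in Orlicz form) Let Ω ⊂ ℝⁿ be a bounded open set with diameter diam(Ω) > 0. Then for every smooth compactly supported function u ∈ C_c^∞(Ω) one has ∫_Ω G(|u(x)|/diam(Ω)) dx ≤ ∫_Ω G(|Du(x)|) dx, where Du denotes the gradient of u. -/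
open Real MeasureTheory Set Filter

/-!
For a fixed vector `v`, the fundamental theorem of calculus bounds `‖u x - u (x - v)‖` by the
average of `‖Du · v‖` over the segment from `x - v` to `x`; Jensen's inequality moves a convex `G`
inside this average, and integrating over `x` the translations disappear, so that
`∫ G ‖u x - u (x - v)‖ ≤ ∫ G ‖Du · v‖`. If `v` has length `diam Ω`, then `x` and `x - v` cannot both
lie in the support of `u`, and the left-hand side is at least `∫ G ‖u‖`. Applying this to
`s ↦ G (s / diam Ω)` gives the inequality. The Orlicz condition makes `g` nondecreasing and hence
`G` convex.
-/

/-- A (finite-valued) Young function, as used to define Orlicz spaces. Only the values on `[0, ∞)`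
matter, and the zero function is allowed. -/
structure IsYoungFunction (G : ℝ → ℝ) : Prop where
  convexOn : ConvexOn ℝ (Ici 0) G
  nonneg : ∀ s, 0 ≤ s → 0 ≤ G s
  map_zero : G 0 = 0

namespace IsYoungFunction

variable {G : ℝ → ℝ}

lemma monotoneOn (hG : IsYoungFunction G) : MonotoneOn G (Ici 0) := by
  intro a ha b hb hab
  have hle : G a ≤ max (G 0) (G b) :=
    hG.convexOn.le_max_of_mem_Icc self_mem_Ici hb ⟨ha, hab⟩
  rwa [hG.map_zero, max_eq_right (hG.nonneg b hb)] at hle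

lemma le_mul_map_one (hG : IsYoungFunction G) {s : ℝ} (hs : s ∈ Icc 0 1) : G s ≤ s * G 1 := by
  simpa [hG.map_zero] using hG.convexOn.2 (self_mem_Ici (a := (0 : ℝ))) (mem_Ici.2 zero_le_one)
    (sub_nonneg.2 hs.2) hs.1 (sub_add_cancel 1 s)

lemma continuousOn (hG : IsYoungFunction G) : ContinuousOn G (Ici 0) := by
  refine hG.convexOn.continuousOn_Ici ?_
  have hlim : Tendsto (fun s => s * G 1) (nhdsWithin 0 (Ici 0)) (nhds 0) := by
    have hcont : Continuous fun s => s * G 1 := by fun_prop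
    simpa using (hcont.tendsto 0).mono_left nhdsWithin_le_nhds
  rw [ContinuousWithinAt, hG.map_zero]
  refine tendsto_of_tendsto_of_tendsto_of_le_of_le' tendsto_const_nhds hlim ?_ ?_
  · filter_upwards [self_mem_nhdsWithin] with s hs using hG.nonneg s hs
  · filter_upwards [Icc_mem_nhdsGE zero_lt_one] with s hs using hG.le_mul_map_one hs

lemma continuous_comp {X : Type*} [TopologicalSpace X] (hG : IsYoungFunction G) {f : X → ℝ}
    (hf : Continuous f) (hf₀ : ∀ x, 0 ≤ f x) : Continuous fun x => G (f x) :=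
  hG.continuousOn.comp_continuous hf hf₀

lemma comp_div (hG : IsYoungFunction G) {d : ℝ} (hd : 0 ≤ d) :
    IsYoungFunction fun s => G (s / d) where
  convexOn := by
    have hpre := hG.convexOn.comp_linearMap (LinearMap.mulRight ℝ d⁻¹)
    exact hpre.subset (fun s hs => mul_nonneg hs (inv_nonneg.2 hd)) (convex_Ici 0)
  nonneg s hs := hG.nonneg _ (div_nonneg hs hd)
  map_zero := by rw [zero_div, hG.map_zero]

lemma integrable_comp_norm {X F : Type*} [TopologicalSpace X] [MeasurableSpace X]
    [OpensMeasurableSpace X] [NormedAddCommGroup F] (hG : IsYoungFunction G) (μ : Measure X)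
    [IsFiniteMeasureOnCompacts μ] {f : X → F} (hf : Continuous f) (hfs : HasCompactSupport f) :
    Integrable (fun x => G ‖f x‖) μ :=
  (hG.continuous_comp hf.norm fun x => norm_nonneg _).integrable_of_hasCompactSupport
    (hfs.comp_left (g := fun y => G ‖y‖) (by rw [norm_zero, hG.map_zero]))

lemma integrable_comp_norm_sub {A F : Type*} [TopologicalSpace A] [AddGroup A]
    [IsTopologicalAddGroup A] [MeasurableSpace A] [OpensMeasurableSpace A] [NormedAddCommGroup F]
    (hG : IsYoungFunction G) (μ : Measure A) [IsFiniteMeasureOnCompacts μ] {f : A → F}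
    (hf : Continuous f) (hfs : HasCompactSupport f) (v : A) :
    Integrable (fun x => G ‖f x - f (x - v)‖) μ :=
  hG.integrable_comp_norm μ (by fun_prop)
    (hfs.sub (hfs.comp_homeomorph (Homeomorph.subRight v)))

end IsYoungFunction

lemma convexOn_intervalIntegral_of_monotone {g : ℝ → ℝ} (hg : Monotone g) (a : ℝ) :
    ConvexOn ℝ univ fun s => ∫ r in a..s, g r := by
  have hint : ∀ x y, IntervalIntegrable g volume x y := fun x y => hg.intervalIntegrable
  refine convexOn_of_slope_mono_adjacent convex_univ fun {x y z} _ _ hxy hyz => ?_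
  simp only [intervalIntegral.integral_interval_sub_left (hint _ _) (hint _ _)]
  calc (∫ r in x..y, g r) / (y - x)
      ≤ g y := by
        rw [div_le_iff₀' (sub_pos.2 hxy), ← smul_eq_mul, ← intervalIntegral.integral_const]
        exact intervalIntegral.integral_mono_on hxy.le (hint x y) intervalIntegrable_const
          fun r hr => hg hr.2
    _ ≤ (∫ r in y..z, g r) / (z - y) := by
        rw [le_div_iff₀' (sub_pos.2 hyz), ← smul_eq_mul, ← intervalIntegral.integral_const]
        exact intervalIntegral.integral_mono_on hyz.le intervalIntegrable_const (hint y z)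
          fun r hr => hg hr.1

lemma monotone_indicator_Ioi {g : ℝ → ℝ} {a : ℝ} (hg₀ : ∀ s, a < s → 0 ≤ g s)
    (hg : MonotoneOn g (Ioi a)) : Monotone ((Ioi a).indicator g) := by
  intro s t hst
  by_cases hs : s ∈ Ioi a
  · have ht : t ∈ Ioi a := lt_of_lt_of_le hs hst
    simpa only [indicator_of_mem hs, indicator_of_mem ht] using hg hs ht hst
  · rw [indicator_of_notMem hs]
    exact indicator_nonneg hg₀ t

lemma isYoungFunction_intervalIntegral {g : ℝ → ℝ} (hg₀ : ∀ s, 0 < s → 0 ≤ g s)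
    (hg : MonotoneOn g (Ioi 0)) : IsYoungFunction fun s => ∫ r in (0 : ℝ)..s, g r where
  convexOn := by
    have hconv := convexOn_intervalIntegral_of_monotone (monotone_indicator_Ioi hg₀ hg) 0
    refine (hconv.subset (subset_univ _) (convex_Ici 0)).congr fun s hs => ?_
    refine intervalIntegral.integral_congr_ae (Eventually.of_forall fun r hr => ?_)
    rw [uIoc_of_le hs] at hr
    exact indicator_of_mem (mem_Ioi.2 hr.1) g
  nonneg s hs := by
    rw [intervalIntegral.integral_of_le hs]
    exact setIntegral_nonneg measurableSet_Ioc fun r hr => hg₀ r hr.1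
  map_zero := intervalIntegral.integral_same

lemma monotoneOn_of_sub_one_mul_le_mul_deriv {p : ℝ} (hp : 1 ≤ p) {g g' : ℝ → ℝ}
    (hg₀ : ∀ s, 0 < s → 0 ≤ g s) (hderiv : ∀ s, 0 < s → HasDerivAt g (g' s) s)
    (h : ∀ s, 0 < s → (p - 1) * g s ≤ s * g' s) : MonotoneOn g (Ioi 0) := by
  have hg'₀ : ∀ s, 0 < s → 0 ≤ g' s := fun s hs =>
    nonneg_of_mul_nonneg_right ((mul_nonneg (sub_nonneg.2 hp) (hg₀ s hs)).trans (h s hs)) hs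
  refine monotoneOn_of_hasDerivWithinAt_nonneg (f' := g') (convex_Ioi 0)
    (fun s hs => (hderiv s hs).continuousAt.continuousWithinAt) ?_ ?_
  · rw [interior_Ioi]
    exact fun s hs => (hderiv s hs).hasDerivWithinAt
  · rwa [interior_Ioi]

lemma isYoungFunction_intervalIntegral_of_sub_one_mul_le_mul_deriv {p : ℝ} (hp : 1 ≤ p)
    {g g' : ℝ → ℝ} (hg₀ : ∀ s, 0 < s → 0 ≤ g s) (hderiv : ∀ s, 0 < s → HasDerivAt g (g' s) s)
    (h : ∀ s, 0 < s → (p - 1) * g s ≤ s * g' s) :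
    IsYoungFunction fun s => ∫ r in (0 : ℝ)..s, g r :=
  isYoungFunction_intervalIntegral hg₀ (monotoneOn_of_sub_one_mul_le_mul_deriv hp hg₀ hderiv h)

section Translation

variable {E F : Type*} [NormedAddCommGroup E] [NormedSpace ℝ E]
  [NormedAddCommGroup F] [NormedSpace ℝ F]

lemma continuous_norm_fderiv_sub_smul_apply {u : E → F} (hu : ContDiff ℝ 1 u) (x v : E) :
    Continuous fun t : ℝ => ‖fderiv ℝ u (x - t • v) v‖ := by
  have hline : Continuous fun t : ℝ => x - t • v := by fun_prop
  exact (((hu.continuous_fderiv one_ne_zero).comp hline).clm_apply continuous_const).norm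

lemma norm_sub_le_setIntegral_norm_fderiv {u : E → F} (hu : ContDiff ℝ 1 u) (x v : E) :
    ‖u x - u (x - v)‖ ≤ ∫ t in Ioc (0 : ℝ) 1, ‖fderiv ℝ u (x - t • v) v‖ := by
  have hderiv : ∀ t : ℝ,
      HasDerivAt (fun t : ℝ => u (x - t • v)) (fderiv ℝ u (x - t • v) (-v)) t := by
    intro t
    have hline : HasDerivAt (fun t : ℝ => x - t • v) (-v) t := by
      simpa using ((hasDerivAt_id t).smul_const v).const_sub x
    exact (hu.differentiable one_ne_zero _).hasFDerivAt.comp_hasDerivAt t hline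
  rw [← intervalIntegral.integral_of_le zero_le_one, norm_sub_rev]
  simpa using norm_sub_le_integral_of_norm_deriv_le_of_le
    (f := fun t : ℝ => u (x - t • v)) (B := fun t => ‖fderiv ℝ u (x - t • v) v‖) zero_le_one
    (fun t _ => (hderiv t).continuousAt.continuousWithinAt)
    (fun t _ => (hderiv t).differentiableAt.differentiableWithinAt)
    (Eventually.of_forall fun t _ => by simp [(hderiv t).deriv])
    ((continuous_norm_fderiv_sub_smul_apply hu x v).intervalIntegrable 0 1)

instance isProbabilityMeasure_restrict_Ioc_zero_one :
    IsProbabilityMeasure (volume.restrict (Ioc (0 : ℝ) 1)) :=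
  ⟨by simp⟩

lemma IsYoungFunction.map_norm_sub_le {G : ℝ → ℝ} (hG : IsYoungFunction G) {u : E → F}
    (hu : ContDiff ℝ 1 u) (x v : E) :
    G ‖u x - u (x - v)‖ ≤ ∫ t in Ioc (0 : ℝ) 1, G ‖fderiv ℝ u (x - t • v) v‖ := by
  have hf := continuous_norm_fderiv_sub_smul_apply hu x v
  have hftc := norm_sub_le_setIntegral_norm_fderiv hu x v
  calc G ‖u x - u (x - v)‖
      ≤ G (∫ t in Ioc (0 : ℝ) 1, ‖fderiv ℝ u (x - t • v) v‖) :=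
        hG.monotoneOn (norm_nonneg _) ((norm_nonneg _).trans hftc) hftc
    _ ≤ ∫ t in Ioc (0 : ℝ) 1, G ‖fderiv ℝ u (x - t • v) v‖ :=
        hG.convexOn.map_integral_le hG.continuousOn isClosed_Ici
          (Eventually.of_forall fun t => norm_nonneg _) hf.integrableOn_Ioc
          (hG.continuous_comp hf fun t => norm_nonneg _).integrableOn_Ioc

end Translation

section Averaging

variable {T A V : Type*} [MeasurableSpace T] [AddGroup A] [MeasurableSpace A] [MeasurableSub₂ A]
  [NormedAddCommGroup V]
  {ν : Measure T} {μ : Measure A} [SFinite μ] [μ.IsAddRightInvariant] {H : A → V} {φ : T → A}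

lemma integrable_comp_sub_prod [IsFiniteMeasure ν] (hH : Integrable H μ) (hφ : Measurable φ) :
    Integrable (fun p : T × A => H (p.2 - φ p.1)) (ν.prod μ) := by
  have hshear : MeasurePreserving (fun p : T × A => (p.1, p.2 - φ p.1)) (ν.prod μ) (ν.prod μ) :=
    (MeasurePreserving.id ν).skew_product (g := fun t x => x - φ t) (by fun_prop)
      (Eventually.of_forall fun t => map_sub_right_eq_self μ (φ t))
  exact hshear.integrable_comp_of_integrable (hH.comp_snd ν)

lemma integral_integral_comp_sub [MeasurableAdd A] [NormedSpace ℝ V] [CompleteSpace V]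
    [IsProbabilityMeasure ν] (hH : Integrable H μ) (hφ : Measurable φ) :
    ∫ x, ∫ t, H (x - φ t) ∂ν ∂μ = ∫ x, H x ∂μ := by
  rw [integral_integral_swap (f := fun x t => H (x - φ t)) (integrable_comp_sub_prod hH hφ).swap]
  simp only [integral_sub_right_eq_self H, integral_const, probReal_univ, one_smul]

end Averaging

lemma sub_diam_smul_notMem_of_mem_interior {E : Type*} [NormedAddCommGroup E] [NormedSpace ℝ E]
    {Ω : Set E} (hΩ : Bornology.IsBounded Ω) {e x : E} (he : ‖e‖ = 1) (hx : x ∈ interior Ω) :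
    x - Metric.diam Ω • e ∉ Ω := by
  intro hy
  obtain ⟨ε, hε, hball⟩ := Metric.mem_nhds_iff.1 (mem_interior_iff_mem_nhds.1 hx)
  have hz : x + (ε / 2) • e ∈ Ω :=
    hball (by simp [norm_smul, he, abs_of_pos hε, hε])
  have hdist : dist (x + (ε / 2) • e) (x - Metric.diam Ω • e) = ε / 2 + Metric.diam Ω := by
    have hsub : x + (ε / 2) • e - (x - Metric.diam Ω • e) = (ε / 2 + Metric.diam Ω) • e := by
      module
    rw [dist_eq_norm, hsub, norm_smul, he, mul_one,
      Real.norm_of_nonneg (add_nonneg (half_pos hε).le Metric.diam_nonneg)]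
  have hle := Metric.dist_le_diam_of_mem hΩ hz hy
  linarith

section Poincare

variable {E F : Type*} [NormedAddCommGroup E] [NormedSpace ℝ E] [FiniteDimensional ℝ E]
  [MeasurableSpace E] [BorelSpace E] [NormedAddCommGroup F] [NormedSpace ℝ F]
  (μ : Measure E) [μ.IsAddHaarMeasure] {G : ℝ → ℝ}

lemma IsYoungFunction.integral_comp_norm_sub_le (hG : IsYoungFunction G) {u : E → F}
    (hu : ContDiff ℝ 1 u) (hus : HasCompactSupport u) (v : E) :
    ∫ x, G ‖u x - u (x - v)‖ ∂μ ≤ ∫ x, G ‖fderiv ℝ u x v‖ ∂μ := by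
  have hH : Integrable (fun x => G ‖fderiv ℝ u x v‖) μ :=
    hG.integrable_comp_norm μ ((hu.continuous_fderiv one_ne_zero).clm_apply continuous_const)
      (hus.fderiv_apply ℝ v)
  have hφ : Measurable fun t : ℝ => t • v := by fun_prop
  calc ∫ x, G ‖u x - u (x - v)‖ ∂μ
      ≤ ∫ x, (∫ t in Ioc (0 : ℝ) 1, G ‖fderiv ℝ u (x - t • v) v‖) ∂μ :=
        integral_mono
          (hG.integrable_comp_norm_sub μ hu.continuous hus v)
          (integrable_comp_sub_prod hH hφ).swap.integral_prod_left
          fun x => hG.map_norm_sub_le hu x v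
    _ = ∫ x, G ‖fderiv ℝ u x v‖ ∂μ := integral_integral_comp_sub hH hφ

lemma IsYoungFunction.integral_comp_norm_le_of_disjoint_translate (hG : IsYoungFunction G)
    {u : E → F} (hu : ContDiff ℝ 1 u) (hus : HasCompactSupport u) {v : E}
    (hv : ∀ x, u x ≠ 0 → u (x - v) = 0) :
    ∫ x, G ‖u x‖ ∂μ ≤ ∫ x, G ‖fderiv ℝ u x v‖ ∂μ := by
  have hle : ∀ x, G ‖u x‖ ≤ G ‖u x - u (x - v)‖ := by
    intro x
    by_cases hx : u x = 0
    · rw [hx, norm_zero, hG.map_zero]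
      exact hG.nonneg _ (norm_nonneg _)
    · rw [hv x hx, sub_zero]
  calc ∫ x, G ‖u x‖ ∂μ
      ≤ ∫ x, G ‖u x - u (x - v)‖ ∂μ :=
        integral_mono (hG.integrable_comp_norm μ hu.continuous hus)
          (hG.integrable_comp_norm_sub μ hu.continuous hus v) hle
    _ ≤ ∫ x, G ‖fderiv ℝ u x v‖ ∂μ := hG.integral_comp_norm_sub_le μ hu hus v

lemma IsYoungFunction.integral_comp_norm_div_le_of_disjoint_translate (hG : IsYoungFunction G)
    {u : E → F} (hu : ContDiff ℝ 1 u) (hus : HasCompactSupport u) {d : ℝ} (hd : 0 < d) {e : E}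
    (he : ‖e‖ ≤ 1) (hshift : ∀ x, u x ≠ 0 → u (x - d • e) = 0) :
    ∫ x, G (‖u x‖ / d) ∂μ ≤ ∫ x, G ‖fderiv ℝ u x‖ ∂μ := by
  have hDu : Continuous (fderiv ℝ u) := hu.continuous_fderiv one_ne_zero
  have hdir : ∀ x, G (‖fderiv ℝ u x (d • e)‖ / d) ≤ G ‖fderiv ℝ u x‖ := by
    intro x
    rw [map_smul, norm_smul, Real.norm_of_nonneg hd.le, mul_div_cancel_left₀ _ hd.ne']
    exact hG.monotoneOn (norm_nonneg _) (norm_nonneg _) ((fderiv ℝ u x).unit_le_opNorm e he)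
  calc ∫ x, G (‖u x‖ / d) ∂μ
      ≤ ∫ x, G (‖fderiv ℝ u x (d • e)‖ / d) ∂μ :=
        (hG.comp_div hd.le).integral_comp_norm_le_of_disjoint_translate μ hu hus hshift
    _ ≤ ∫ x, G ‖fderiv ℝ u x‖ ∂μ :=
        integral_mono ((hG.comp_div hd.le).integrable_comp_norm μ
            (hDu.clm_apply continuous_const) (hus.fderiv_apply ℝ _))
          (hG.integrable_comp_norm μ hDu (hus.fderiv ℝ)) hdir

theorem poincare_inequality_orlicz_general (hG : IsYoungFunction G) {Ω : Set E}
    (hΩ : Bornology.IsBounded Ω) (hdiam : 0 < Metric.diam Ω) {u : E → F} (hu : ContDiff ℝ 1 u)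
    (hsupp : tsupport u ⊆ Ω) :
    ∫ x in Ω, G (‖u x‖ / Metric.diam Ω) ∂μ ≤ ∫ x in Ω, G ‖fderiv ℝ u x‖ ∂μ := by
  have : Nontrivial E := by
    by_contra hE
    rw [not_nontrivial_iff_subsingleton] at hE
    exact hdiam.ne' (Metric.diam_subsingleton Ω.subsingleton_of_subsingleton)
  obtain ⟨e, he⟩ := exists_norm_eq E zero_le_one
  have hus : HasCompactSupport u :=
    Metric.isCompact_of_isClosed_isBounded (isClosed_tsupport u) (hΩ.subset hsupp)
  have hu₀ : ∀ x, x ∉ Ω → u x = 0 := fun x hx =>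
    image_eq_zero_of_notMem_tsupport fun h => hx (hsupp h)
  have hDu₀ : ∀ x, x ∉ Ω → fderiv ℝ u x = 0 := fun x hx =>
    image_eq_zero_of_notMem_tsupport fun h => hx (hsupp (tsupport_fderiv_subset ℝ h))
  have hshift : ∀ x, u x ≠ 0 → u (x - Metric.diam Ω • e) = 0 := fun x hx =>
    hu₀ _ (sub_diam_smul_notMem_of_mem_interior hΩ he (interior_maximal
      ((subset_tsupport u).trans hsupp) hu.continuous.isOpen_support hx))
  rw [setIntegral_eq_integral_of_forall_compl_eq_zero fun x hx => by simp [hu₀ x hx, hG.map_zero],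
    setIntegral_eq_integral_of_forall_compl_eq_zero fun x hx => by simp [hDu₀ x hx, hG.map_zero]]
  exact hG.integral_comp_norm_div_le_of_disjoint_translate μ hu hus hdiam he.le hshift

end Poincare

/-- Poincaré's inequality in Orlicz form: for a bounded open `Ω ⊂ ℝⁿ` with positive
diameter and every `u ∈ C_c^∞(Ω)`,
`∫_Ω G(|u|/diam Ω) ≤ ∫_Ω G(|Du|)`. -/
theorem poincare_inequality_orlicz
    (g₀ g₁ : ℝ) (hg₀ : 1 < g₀) (hg01 : g₀ ≤ g₁)
    (g g' : ℝ → ℝ)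
    (hg_pos : ∀ s, 0 < s → 0 < g s)
    (hg_deriv : ∀ s, 0 < s → HasDerivAt g (g' s) s)
    (hg'_cont : ContinuousOn g' (Set.Ioi 0))
    (hOrlicz : ∀ s, 0 < s → (g₀ - 1) * g s ≤ s * g' s ∧ s * g' s ≤ (g₁ - 1) * g s)
    (G : ℝ → ℝ) (hG : ∀ s, G s = ∫ r in (0:ℝ)..s, g r)
    (n : ℕ) (hn : 2 ≤ n)
    (Ω : Set (EuclideanSpace ℝ (Fin n)))
    (hΩopen : IsOpen Ω) (hΩbdd : Bornology.IsBounded Ω)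
    (hdiam : 0 < Metric.diam Ω)
    (u : EuclideanSpace ℝ (Fin n) → ℝ)
    (hu : ContDiff ℝ (⊤ : ℕ∞) u) (hu_supp : HasCompactSupport u)
    (hsupp : tsupport u ⊆ Ω) :
    (∫ x in Ω, G (|u x| / Metric.diam Ω)) ≤ ∫ x in Ω, G ‖fderiv ℝ u x‖ := by
  have hYoung : IsYoungFunction G := funext hG ▸
    isYoungFunction_intervalIntegral_of_sub_one_mul_le_mul_deriv hg₀.le
      (fun s hs => (hg_pos s hs).le) hg_deriv fun s hs => (hOrlicz s hs).1
  exact poincare_inequality_orlicz_general volume hYoung hΩbdd hdiam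
    (hu.of_le (by exact_mod_cast le_top)) hsupp
end

section
/- (Parabolic Sobolev inequality) Let 1 ≤ q < min{n, g₀} and q* = nq/(n − q). Then there exists a constant c > 0, depending only on n, g₁ and q, such that the following holds: for every R > 0, every bounded open interval Γ ⊂ ℝ, and every smooth function u : ℝⁿ × ℝ → ℝ such that u(·,t) is compactly supported in the ball B_R ⊂ ℝⁿ for every t ∈ Γ, one has ⨍_{B_R×Γ} G(|u|/R)^{1/q}·|u|^{2(1−1/q*)} dx dt ≤ c·(ess sup_{t∈Γ} ⨍_{B_R} |u(x,t)|² dx)^{1−1/q*}·(⨍_{B_R×Γ} G(|Du|) dx dt)^{1/q}, where Du denotes the spatial gradient of u and ⨍ denotes the integral average. -/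
open Real MeasureTheory Set Filter

/-
On a time slice `v = u(·, t)`, consider `w = G(|v| / R) ^ (1/q)`, which is `C¹` across the zeros of
`v` because `q < g₀`. The growth condition yields the Young-type bound
`|R Dw| ^ q ≤ C (G(|v| / R) + G(|Dv|))`. For `q = 1` its version with a small factor in front of
`G(|v| / R)`, together with an integration by parts against a linear function, gives the modular
Poincaré inequality `∫ G(|v| / R) ≤ C ∫ G(|Dv|)`. Hence `‖R Dw‖_q ≤ C (∫ G(|Dv|)) ^ (1/q)`; the
Gagliardo–Nirenberg–Sobolev inequality for `w` and Hölder's inequality with exponents `q*` and its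
conjugate bound `∫ w |v| ^ (2 (1 - 1/q*))`. Averaging in time, the `L²` factor is absorbed into its
essential supremum and the power `1/q ≤ 1` is taken out of the time average by Jensen's inequality.
-/

open scoped Topology

section Growth

lemma nonneg_of_hasDerivAt_nonneg_of_tendsto_zero {f f' : ℝ → ℝ}
    (hf : ∀ s, 0 < s → HasDerivAt f (f' s) s) (hf' : ∀ s, 0 < s → 0 ≤ f' s)
    (hlim : Tendsto f (𝓝[>] 0) (𝓝 0)) {s : ℝ} (hs : 0 < s) : 0 ≤ f s := by
  have hmono : MonotoneOn f (Ioi 0) :=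
    monotoneOn_of_hasDerivWithinAt_nonneg (convex_Ioi 0)
      (fun t ht => (hf t ht).continuousAt.continuousWithinAt)
      (fun t ht => (hf t (interior_subset ht)).hasDerivWithinAt)
      (fun t ht => hf' t (interior_subset ht))
  refine le_of_tendsto hlim ?_
  filter_upwards [Ioc_mem_nhdsGT hs] with t ht using hmono ht.1 hs ht.2

lemma continuousAt_zero_of_abs_le_mul_rpow {f : ℝ → ℝ} {C a : ℝ} (ha : 0 < a)
    (hf : ∀ s, |s| ≤ 1 → |f s| ≤ C * |s| ^ a) : ContinuousAt f 0 := by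
  have hf0 : f 0 = 0 := by simpa [zero_rpow ha.ne'] using hf 0 (by simp)
  have hlim : Tendsto (fun s : ℝ => C * |s| ^ a) (𝓝 0) (𝓝 0) := by
    have hcont : Continuous fun s : ℝ => C * |s| ^ a :=
      continuous_const.mul (continuous_abs.rpow_const fun _ => Or.inr ha.le)
    simpa [zero_rpow ha.ne'] using hcont.tendsto 0
  rw [ContinuousAt, hf0]
  refine squeeze_zero_norm' ?_ hlim
  filter_upwards [Metric.closedBall_mem_nhds (0 : ℝ) one_pos] with s hs
  exact hf s (by simpa using hs)

/-- `G` is an Orlicz function on `[0, ∞)` with density `g`, whose growth is controlled by the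
indices `g₀ ≤ g₁`: `g₀ ≤ s G'(s) / G(s) ≤ g₁`. The values at negative arguments are irrelevant. -/
structure HasOrliczGrowth (g₀ g₁ : ℝ) (g G : ℝ → ℝ) : Prop where
  one_lt : 1 < g₀
  map_zero : G 0 = 0
  pos : ∀ {s}, 0 < s → 0 < G s
  hasDerivAt : ∀ {s}, 0 < s → HasDerivAt G (g s) s
  continuousOn : ContinuousOn g (Ioi 0)
  lower : ∀ {s}, 0 < s → g₀ * G s ≤ s * g s
  upper : ∀ {s}, 0 < s → s * g s ≤ g₁ * G s

lemma monotoneOn_of_sub_one_mul_le_mul_deriv_s16 {g₀ : ℝ} (hg₀ : 1 ≤ g₀) {g g' : ℝ → ℝ}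
    (hg : ∀ s, 0 < s → 0 < g s) (hg' : ∀ s, 0 < s → HasDerivAt g (g' s) s)
    (hlower : ∀ s, 0 < s → (g₀ - 1) * g s ≤ s * g' s) : MonotoneOn g (Ioi 0) := by
  refine monotoneOn_of_hasDerivWithinAt_nonneg (convex_Ioi 0)
    (fun s hs => (hg' s hs).continuousAt.continuousWithinAt)
    (fun s hs => (hg' s (interior_subset hs)).hasDerivWithinAt) fun s hs => ?_
  have hs : 0 < s := interior_subset hs
  exact nonneg_of_mul_nonneg_right
    ((mul_nonneg (sub_nonneg.2 hg₀) (hg s hs).le).trans (hlower s hs)) hs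

lemma intervalIntegrable_of_monotoneOn_Ioi {g : ℝ → ℝ} {s : ℝ} (hs : 0 < s)
    (hg : ∀ r, 0 < r → 0 ≤ g r) (hmono : MonotoneOn g (Ioi 0)) :
    IntervalIntegrable g volume 0 s := by
  rw [intervalIntegrable_iff_integrableOn_Ioc_of_le hs.le]
  refine IntegrableOn.of_bound measure_Ioc_lt_top
    (aemeasurable_restrict_of_monotoneOn measurableSet_Ioc
      (hmono.mono Ioc_subset_Ioi_self)).aestronglyMeasurable (g s) ?_
  filter_upwards [ae_restrict_mem measurableSet_Ioc] with r hr
  rw [Real.norm_of_nonneg (hg r hr.1)]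
  exact hmono hr.1 hs hr.2

lemma integral_le_mul_of_monotoneOn_Ioi {g : ℝ → ℝ} {s : ℝ} (hs : 0 < s)
    (hg : ∀ r, 0 < r → 0 ≤ g r) (hmono : MonotoneOn g (Ioi 0)) :
    ∫ r in (0 : ℝ)..s, g r ≤ s * g s := by
  calc ∫ r in (0 : ℝ)..s, g r ≤ ∫ _ in (0 : ℝ)..s, g s :=
        intervalIntegral.integral_mono_on_of_le_Ioo hs.le
          (intervalIntegrable_of_monotoneOn_Ioi hs hg hmono) intervalIntegrable_const
          fun r hr => hmono hr.1 hs hr.2.le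
    _ = s * g s := by simp

lemma HasOrliczGrowth.of_mul_deriv_bounds {g₀ g₁ : ℝ} (hg₀ : 1 < g₀) {g g' G : ℝ → ℝ}
    (hg : ∀ s, 0 < s → 0 < g s) (hg' : ∀ s, 0 < s → HasDerivAt g (g' s) s)
    (hgrowth : ∀ s, 0 < s → (g₀ - 1) * g s ≤ s * g' s ∧ s * g' s ≤ (g₁ - 1) * g s)
    (hG : ∀ s, G s = ∫ r in (0 : ℝ)..s, g r) : HasOrliczGrowth g₀ g₁ g G := by
  have hcont : ContinuousOn g (Ioi 0) := fun s hs => (hg' s hs).continuousAt.continuousWithinAt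
  have hmono : MonotoneOn g (Ioi 0) :=
    monotoneOn_of_sub_one_mul_le_mul_deriv_s16 hg₀.le hg hg' fun s hs => (hgrowth s hs).1
  have hg_nonneg : ∀ s, 0 < s → 0 ≤ g s := fun s hs => (hg s hs).le
  have hint : ∀ {s}, 0 < s → IntervalIntegrable g volume 0 s := fun hs =>
    intervalIntegrable_of_monotoneOn_Ioi hs hg_nonneg hmono
  have hpos : ∀ {s}, 0 < s → 0 < G s := fun {s} hs => by
    rw [hG]
    exact intervalIntegral.intervalIntegral_pos_of_pos_on (hint hs) (fun r hr => hg r hr.1) hs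
  have hderiv : ∀ {s}, 0 < s → HasDerivAt G (g s) s := fun {s} hs => by
    rw [funext hG]
    exact intervalIntegral.integral_hasDerivAt_right (hint hs)
      (hcont.stronglyMeasurableAtFilter isOpen_Ioi s hs) (hg' s hs).continuousAt
  have hlim_mul : Tendsto (fun s => s * g s) (𝓝[>] 0) (𝓝 0) := by
    have hlim : Tendsto (fun s : ℝ => s * g 1) (𝓝[>] 0) (𝓝 0) :=
      ((continuous_mul_const (g 1)).tendsto' 0 0 (zero_mul _)).mono_left nhdsWithin_le_nhds
    refine squeeze_zero' ?_ ?_ hlim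
    · filter_upwards [self_mem_nhdsWithin] with s hs using mul_nonneg (mem_Ioi.1 hs).le (hg s hs).le
    · filter_upwards [Ioc_mem_nhdsGT one_pos] with s hs
      exact mul_le_mul_of_nonneg_left (hmono hs.1 (mem_Ioi.2 one_pos) hs.2) hs.1.le
  have hlim : Tendsto G (𝓝[>] 0) (𝓝 0) := by
    refine squeeze_zero' ?_ ?_ hlim_mul
    · filter_upwards [self_mem_nhdsWithin] with s hs using (hpos hs).le
    · filter_upwards [self_mem_nhdsWithin] with s hs
      exact (hG s).trans_le (integral_le_mul_of_monotoneOn_Ioi hs hg_nonneg hmono)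
  have hderiv_mul : ∀ s, 0 < s → HasDerivAt (fun s => s * g s) (g s + s * g' s) s := fun s hs => by
    simpa only [one_mul] using (hasDerivAt_id' s).fun_mul (hg' s hs)
  refine ⟨hg₀, by simp [hG], hpos, hderiv, hcont, fun {s} hs => ?_, fun {s} hs => ?_⟩
  · refine sub_nonneg.1 (nonneg_of_hasDerivAt_nonneg_of_tendsto_zero
      (fun s hs => (hderiv_mul s hs).fun_sub ((hderiv hs).const_mul g₀)) (fun s hs => ?_)
      (by simpa using hlim_mul.sub (hlim.const_mul g₀)) hs)
    linarith [(hgrowth s hs).1]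
  · refine sub_nonneg.1 (nonneg_of_hasDerivAt_nonneg_of_tendsto_zero
      (fun s hs => ((hderiv hs).const_mul g₁).fun_sub (hderiv_mul s hs)) (fun s hs => ?_)
      (by simpa using (hlim.const_mul g₁).sub hlim_mul) hs)
    linarith [(hgrowth s hs).2]

namespace HasOrliczGrowth

variable {g₀ g₁ : ℝ} {g G : ℝ → ℝ}

lemma nonneg (h : HasOrliczGrowth g₀ g₁ g G) {s : ℝ} (hs : 0 ≤ s) : 0 ≤ G s := by
  rcases hs.eq_or_lt with rfl | hs
  · exact h.map_zero.ge
  · exact (h.pos hs).le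

lemma density_nonneg (h : HasOrliczGrowth g₀ g₁ g G) {s : ℝ} (hs : 0 < s) : 0 ≤ g s :=
  nonneg_of_mul_nonneg_right
    ((mul_nonneg (zero_le_one.trans h.one_lt.le) (h.pos hs).le).trans (h.lower hs)) hs

lemma one_lt_upper (h : HasOrliczGrowth g₀ g₁ g G) : 1 < g₁ :=
  h.one_lt.trans_le
    (le_of_mul_le_mul_right ((h.lower one_pos).trans (h.upper one_pos)) (h.pos one_pos))

lemma hasDerivAt_mul_rpow_neg (h : HasOrliczGrowth g₀ g₁ g G) (p : ℝ) {s : ℝ} (hs : 0 < s) :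
    HasDerivAt (fun s => G s * s ^ (-p)) (s ^ (-p - 1) * (s * g s - p * G s)) s := by
  have hrpow : s ^ (-p) = s ^ (-p - 1) * s := by rw [← rpow_add_one hs.ne', sub_add_cancel]
  refine ((h.hasDerivAt hs).fun_mul (hasDerivAt_rpow_const (Or.inl hs.ne'))).congr_deriv ?_
  rw [hrpow]
  ring

lemma rpow_mul_le (h : HasOrliczGrowth g₀ g₁ g G) {p c s : ℝ} (hp : p ≤ g₀) (hc : 1 ≤ c)
    (hs : 0 ≤ s) : c ^ p * G s ≤ G (c * s) := by
  rcases hs.eq_or_lt with rfl | hs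
  · simp [h.map_zero]
  have hmono : MonotoneOn (fun s => G s * s ^ (-p)) (Ioi 0) :=
    monotoneOn_of_hasDerivWithinAt_nonneg (convex_Ioi 0)
      (fun t ht => (h.hasDerivAt_mul_rpow_neg p ht).continuousAt.continuousWithinAt)
      (fun t ht => (h.hasDerivAt_mul_rpow_neg p (interior_subset ht)).hasDerivWithinAt)
      fun t ht => by
        have ht : 0 < t := interior_subset ht
        have hpG := mul_le_mul_of_nonneg_right hp (h.pos ht).le
        exact mul_nonneg (by positivity) (sub_nonneg.2 (hpG.trans (h.lower ht)))
  have hc0 : 0 < c := one_pos.trans_le hc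
  have hle := hmono hs (mul_pos hc0 hs) (le_mul_of_one_le_left hs.le hc)
  simp only [rpow_neg hs.le, rpow_neg (mul_pos hc0 hs).le, ← div_eq_mul_inv,
    mul_rpow hc0.le hs.le, ← div_div] at hle
  rw [div_le_div_iff_of_pos_right (by positivity), le_div_iff₀' (by positivity)] at hle
  exact hle

lemma le_rpow_mul (h : HasOrliczGrowth g₀ g₁ g G) {c s : ℝ} (hc : 1 ≤ c) (hs : 0 ≤ s) :
    G (c * s) ≤ c ^ g₁ * G s := by
  rcases hs.eq_or_lt with rfl | hs
  · simp [h.map_zero]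
  have hanti : AntitoneOn (fun s => G s * s ^ (-g₁)) (Ioi 0) :=
    antitoneOn_of_hasDerivWithinAt_nonpos (convex_Ioi 0)
      (fun t ht => (h.hasDerivAt_mul_rpow_neg g₁ ht).continuousAt.continuousWithinAt)
      (fun t ht => (h.hasDerivAt_mul_rpow_neg g₁ (interior_subset ht)).hasDerivWithinAt)
      fun t ht => by
        have ht : 0 < t := interior_subset ht
        exact mul_nonpos_of_nonneg_of_nonpos (by positivity) (sub_nonpos.2 (h.upper ht))
  have hc0 : 0 < c := one_pos.trans_le hc
  have hle := hanti hs (mul_pos hc0 hs) (le_mul_of_one_le_left hs.le hc)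
  simp only [rpow_neg hs.le, rpow_neg (mul_pos hc0 hs).le, ← div_eq_mul_inv,
    mul_rpow hc0.le hs.le, ← div_div] at hle
  rw [div_le_div_iff_of_pos_right (by positivity), div_le_iff₀' (by positivity)] at hle
  exact hle

lemma mul_div_rpow_le_add (h : HasOrliczGrowth g₀ g₁ g G) {p σ ξ : ℝ} (hp0 : 0 ≤ p) (hp : p ≤ g₀)
    (hσ : 0 < σ) (hξ : 0 ≤ ξ) : (ξ / σ) ^ p * G σ ≤ G σ + G ξ := by
  have hG := (h.pos hσ).le
  rcases le_total ξ σ with hle | hle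
  · have hpow : (ξ / σ) ^ p ≤ 1 := rpow_le_one (by positivity) ((div_le_one hσ).2 hle) hp0
    linarith [mul_le_of_le_one_left hG hpow, h.nonneg hξ]
  · have hscale := h.rpow_mul_le hp ((one_le_div hσ).2 hle) hσ.le
    rw [div_mul_cancel₀ ξ hσ.ne'] at hscale
    linarith

end HasOrliczGrowth

/-- The even extension to `ℝ` of `G ^ (1 / p)`. It is this power of `G` that the Sobolev inequality
with exponent `p` is applied to. -/
noncomputable def evenRoot (G : ℝ → ℝ) (p s : ℝ) : ℝ :=
  G |s| ^ (1 / p)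

/-- The derivative of `evenRoot G p` when `G` has density `g`; the sign makes it vanish at `0`. -/
noncomputable def evenRootDeriv (g G : ℝ → ℝ) (p s : ℝ) : ℝ :=
  SignType.sign s * (g |s| / p * G |s| ^ (1 / p - 1))

lemma evenRoot_div (G : ℝ → ℝ) (p s : ℝ) {R : ℝ} (hR : 0 < R) :
    evenRoot G p (s / R) = G (|s| / R) ^ (1 / p) := by
  rw [evenRoot, abs_div, abs_of_pos hR]

namespace HasOrliczGrowth

variable {g₀ g₁ p : ℝ} {g G : ℝ → ℝ}

lemma evenRoot_nonneg (h : HasOrliczGrowth g₀ g₁ g G) (p s : ℝ) : 0 ≤ evenRoot G p s :=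
  rpow_nonneg (h.nonneg (abs_nonneg s)) _

lemma evenRoot_rpow (h : HasOrliczGrowth g₀ g₁ g G) (hp : p ≠ 0) (s : ℝ) :
    evenRoot G p s ^ p = G |s| := by
  rw [evenRoot, ← rpow_mul (h.nonneg (abs_nonneg s)), one_div_mul_cancel hp, rpow_one]

lemma evenRoot_zero (h : HasOrliczGrowth g₀ g₁ g G) (hp : p ≠ 0) : evenRoot G p 0 = 0 := by
  rw [evenRoot, abs_zero, h.map_zero, zero_rpow (one_div_ne_zero hp)]

lemma evenRoot_le_mul_rpow (h : HasOrliczGrowth g₀ g₁ g G) (hp : 0 < p) {s : ℝ} (hs : |s| ≤ 1) :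
    evenRoot G p s ≤ evenRoot G p 1 * |s| ^ (g₀ / p) := by
  rcases eq_or_ne s 0 with rfl | hs0
  · rw [h.evenRoot_zero hp.ne']
    exact mul_nonneg (h.evenRoot_nonneg p 1) (by positivity)
  have hs0 := abs_pos.2 hs0
  have hscale := h.rpow_mul_le le_rfl ((one_le_inv₀ hs0).2 hs) hs0.le
  rw [inv_mul_cancel₀ hs0.ne', inv_rpow hs0.le, inv_mul_le_iff₀' (by positivity)] at hscale
  have hroot := rpow_le_rpow (h.pos hs0).le hscale (one_div_nonneg.2 hp.le)
  rw [mul_rpow (h.pos one_pos).le (by positivity), ← rpow_mul hs0.le, mul_one_div] at hroot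
  simpa only [evenRoot, abs_one] using hroot

lemma hasDerivAt_evenRoot_of_ne_zero (h : HasOrliczGrowth g₀ g₁ g G) (p : ℝ) {s : ℝ}
    (hs : s ≠ 0) : HasDerivAt (evenRoot G p) (evenRootDeriv g G p s) s := by
  have hs' := abs_pos.2 hs
  have hpow : HasDerivAt (fun t => G t ^ (1 / p)) (g |s| * (1 / p) * G |s| ^ (1 / p - 1)) |s| :=
    (h.hasDerivAt hs').rpow_const (Or.inl (h.pos hs').ne')
  refine (hpow.comp s (hasDerivAt_abs hs)).congr_deriv ?_
  rw [evenRootDeriv]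
  ring

lemma abs_evenRootDeriv_mul_abs_le (h : HasOrliczGrowth g₀ g₁ g G) (hp : 0 < p) (s : ℝ) :
    |evenRootDeriv g G p s| * |s| ≤ g₁ / p * evenRoot G p s := by
  rcases eq_or_ne s 0 with rfl | hs
  · simp [h.evenRoot_zero hp.ne']
  have hs' := abs_pos.2 hs
  have hG := h.pos hs'
  have hg := h.density_nonneg hs'
  have hsign : |((SignType.sign s : SignType) : ℝ)| = 1 := by
    rcases hs.lt_or_gt with hlt | hgt
    · simp [sign_neg hlt]
    · simp [sign_pos hgt]
  calc |evenRootDeriv g G p s| * |s|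
      = G |s| ^ (1 / p - 1) / p * (|s| * g |s|) := by
        rw [evenRootDeriv, abs_mul, hsign, abs_of_nonneg (by positivity)]
        ring
    _ ≤ G |s| ^ (1 / p - 1) / p * (g₁ * G |s|) :=
        mul_le_mul_of_nonneg_left (h.upper hs') (by positivity)
    _ = g₁ / p * evenRoot G p s := by
        rw [evenRoot, rpow_sub_one hG.ne']
        field_simp

lemma continuous_evenRoot (h : HasOrliczGrowth g₀ g₁ g G) (hp : 0 < p) :
    Continuous (evenRoot G p) := by
  refine continuous_iff_continuousAt.2 fun s => ?_
  rcases eq_or_ne s 0 with rfl | hs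
  · have hg₀ : 0 < g₀ := one_pos.trans h.one_lt
    refine continuousAt_zero_of_abs_le_mul_rpow (C := evenRoot G p 1) (div_pos hg₀ hp)
      fun s hs => ?_
    exact (abs_of_nonneg (h.evenRoot_nonneg p s)).trans_le (h.evenRoot_le_mul_rpow hp hs)
  · exact (h.hasDerivAt_evenRoot_of_ne_zero p hs).continuousAt

lemma continuous_comp_norm (h : HasOrliczGrowth g₀ g₁ g G) {X F : Type*} [TopologicalSpace X]
    [SeminormedAddCommGroup F] {f : X → F} (hf : Continuous f) : Continuous fun x => G ‖f x‖ := by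
  simpa [Function.comp_def, evenRoot] using (h.continuous_evenRoot one_pos).comp hf.norm

lemma continuous_evenRootDeriv (h : HasOrliczGrowth g₀ g₁ g G) (hp : 0 < p) (hpg : p < g₀) :
    Continuous (evenRootDeriv g G p) := by
  refine continuous_iff_continuousAt.2 fun s => ?_
  rcases eq_or_ne s 0 with rfl | hs
  · have hg₁ : 0 < g₁ := one_pos.trans h.one_lt_upper
    refine continuousAt_zero_of_abs_le_mul_rpow (C := g₁ / p * evenRoot G p 1)
      (sub_pos.2 ((one_lt_div hp).2 hpg)) fun s hs => ?_
    rcases eq_or_ne s 0 with rfl | hs0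
    · simpa [evenRootDeriv] using
        mul_nonneg (mul_nonneg (by positivity) (h.evenRoot_nonneg p 1)) (by positivity)
    have hs0 := abs_pos.2 hs0
    rw [rpow_sub_one hs0.ne', ← mul_div_assoc, le_div_iff₀ hs0, mul_assoc]
    exact (h.abs_evenRootDeriv_mul_abs_le hp s).trans
      (mul_le_mul_of_nonneg_left (h.evenRoot_le_mul_rpow hp hs) (by positivity))
  · have hs' := abs_pos.2 hs
    have hsign : ContinuousAt (fun s : ℝ => ((SignType.sign s : SignType) : ℝ)) s :=
      (continuous_of_discreteTopology (f := fun t : SignType => (t : ℝ))).continuousAt.comp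
        (continuousAt_sign_of_ne_zero hs)
    have hg : ContinuousAt (fun s => g |s|) s :=
      (h.continuousOn.continuousAt (Ioi_mem_nhds hs')).comp (f := fun s : ℝ => |s|)
        continuous_abs.continuousAt
    have hG : ContinuousAt (fun s => G |s| ^ (1 / p - 1)) s :=
      (h.continuous_comp_norm continuous_id).continuousAt.rpow_const (Or.inl (h.pos hs').ne')
    exact hsign.mul ((hg.div_const p).mul hG)

lemma hasDerivAt_evenRoot (h : HasOrliczGrowth g₀ g₁ g G) (hp : 0 < p) (hpg : p < g₀) (s : ℝ) :
    HasDerivAt (evenRoot G p) (evenRootDeriv g G p s) s :=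
  hasDerivAt_of_hasDerivAt_of_ne' (fun _ ht => h.hasDerivAt_evenRoot_of_ne_zero p ht)
    (h.continuous_evenRoot hp).continuousAt (h.continuous_evenRootDeriv hp hpg).continuousAt s

lemma contDiff_evenRoot (h : HasOrliczGrowth g₀ g₁ g G) (hp : 0 < p) (hpg : p < g₀) :
    ContDiff ℝ 1 (evenRoot G p) := by
  have hderiv : deriv (evenRoot G p) = evenRootDeriv g G p :=
    funext fun s => (h.hasDerivAt_evenRoot hp hpg s).deriv
  exact contDiff_one_iff_deriv.2
    ⟨fun s => (h.hasDerivAt_evenRoot hp hpg s).differentiableAt,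
      hderiv ▸ h.continuous_evenRootDeriv hp hpg⟩

lemma abs_evenRootDeriv_mul_rpow_le (h : HasOrliczGrowth g₀ g₁ g G) (hp : 0 < p) (hpg : p ≤ g₀)
    (σ : ℝ) {ξ : ℝ} (hξ : 0 ≤ ξ) :
    (|evenRootDeriv g G p σ| * ξ) ^ p ≤ (g₁ / p) ^ p * (G |σ| + G ξ) := by
  have hg₁ : 0 < g₁ := one_pos.trans h.one_lt_upper
  rcases eq_or_ne σ 0 with rfl | hσ
  · have hG := h.nonneg hξ
    have hzero : (|evenRootDeriv g G p 0| * ξ) ^ p = 0 := by simp [evenRootDeriv, hp.ne']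
    rw [hzero, abs_zero, h.map_zero, zero_add]
    positivity
  have hσ := abs_pos.2 hσ
  have hroot := h.evenRoot_nonneg p σ
  calc (|evenRootDeriv g G p σ| * ξ) ^ p
      = (|evenRootDeriv g G p σ| * |σ| * (ξ / |σ|)) ^ p := by congr 1; field_simp
    _ ≤ (g₁ / p * evenRoot G p σ * (ξ / |σ|)) ^ p :=
        rpow_le_rpow (by positivity) (mul_le_mul_of_nonneg_right
          (h.abs_evenRootDeriv_mul_abs_le hp σ) (by positivity)) hp.le
    _ = (g₁ / p) ^ p * ((ξ / |σ|) ^ p * G |σ|) := by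
        rw [mul_rpow (by positivity) (by positivity), mul_rpow (by positivity) hroot,
          h.evenRoot_rpow hp.ne']
        ring
    _ ≤ (g₁ / p) ^ p * (G |σ| + G ξ) := by
        gcongr
        exact h.mul_div_rpow_le_add hp.le hpg hσ hξ

-- The choice `c = 2 * g₁` in `G (c * ξ) ≤ c ^ g₁ * G ξ` compensates the factor `g₁` of the
-- previous bound.
lemma two_mul_abs_evenRootDeriv_one_mul_le (h : HasOrliczGrowth g₀ g₁ g G) (σ : ℝ) {ξ : ℝ}
    (hξ : 0 ≤ ξ) : 2 * (|evenRootDeriv g G 1 σ| * ξ) ≤ G |σ| + (2 * g₁) ^ g₁ * G ξ := by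
  have hg₁ := h.one_lt_upper
  have hbound := h.abs_evenRootDeriv_mul_rpow_le one_pos h.one_lt.le σ
    (mul_nonneg (by positivity : 0 ≤ 2 * g₁) hξ)
  have hscale := h.le_rpow_mul (by linarith : 1 ≤ 2 * g₁) hξ
  simp only [rpow_one, div_one] at hbound
  refine le_of_mul_le_mul_left ?_ (one_pos.trans hg₁)
  calc g₁ * (2 * (|evenRootDeriv g G 1 σ| * ξ)) = |evenRootDeriv g G 1 σ| * (2 * g₁ * ξ) := by ring
    _ ≤ g₁ * (G |σ| + G (2 * g₁ * ξ)) := hbound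
    _ ≤ g₁ * (G |σ| + (2 * g₁) ^ g₁ * G ξ) := by gcongr

end HasOrliczGrowth

end Growth

section CompactSupport

variable {X : Type*} [TopologicalSpace X] [MeasurableSpace X] [OpensMeasurableSpace X]
  {μ : Measure X} [IsFiniteMeasureOnCompacts μ]

lemma HasOrliczGrowth.integrable_comp_mul_norm {g₀ g₁ : ℝ} {g G : ℝ → ℝ}
    (h : HasOrliczGrowth g₀ g₁ g G) {F : Type*} [NormedAddCommGroup F] [NormedSpace ℝ F]
    {f : X → F} (hf : Continuous f) (hs : HasCompactSupport f) {R : ℝ} (hR : 0 ≤ R) :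
    Integrable (fun x => G (R * ‖f x‖)) μ := by
  have hcont : Continuous fun x => G (R * ‖f x‖) := by
    simpa only [norm_smul, Real.norm_of_nonneg hR] using
      h.continuous_comp_norm (hf.fun_const_smul R)
  exact hcont.integrable_of_hasCompactSupport
    (hs.comp_left (g := fun y => G (R * ‖y‖)) (by simp [h.map_zero]))

lemma integral_mul_abs_rpow_le {r : ℝ} (hr : 1 < r) {f v : X → ℝ} (hf : Continuous f)
    (hf0 : ∀ x, 0 ≤ f x) (hfs : HasCompactSupport f) (hv : Continuous v)
    (hvs : HasCompactSupport v) :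
    ∫ x, f x * |v x| ^ (2 * (1 - 1 / r)) ∂μ ≤
      (∫ x, f x ^ r ∂μ) ^ (1 / r) * (∫ x, v x ^ 2 ∂μ) ^ (1 - 1 / r) := by
  have ha : 0 < 1 - 1 / r := sub_pos.2 ((div_lt_one (one_pos.trans hr)).2 hr)
  have hconj : r.HolderConjugate (1 - 1 / r)⁻¹ :=
    holderConjugate_iff.2 ⟨hr, by rw [inv_inv, one_div, add_sub_cancel]⟩
  have hpow : ∀ x, (|v x| ^ (2 * (1 - 1 / r))) ^ (1 - 1 / r)⁻¹ = v x ^ 2 := fun x => by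
    rw [← rpow_mul (abs_nonneg _), mul_assoc, mul_inv_cancel₀ ha.ne', mul_one, rpow_two, sq_abs]
  have hvpow : Continuous fun x => |v x| ^ (2 * (1 - 1 / r)) :=
    hv.abs.rpow_const fun _ => Or.inr (by positivity)
  have hvpows : HasCompactSupport fun x => |v x| ^ (2 * (1 - 1 / r)) :=
    hvs.comp_left (g := fun y => |y| ^ (2 * (1 - 1 / r)))
      (by rw [abs_zero, zero_rpow (by positivity)])
  simpa only [hpow, one_div (1 - 1 / r)⁻¹, inv_inv] using
    integral_mul_le_Lp_mul_Lq_of_nonneg hconj (Eventually.of_forall hf0)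
      (Eventually.of_forall fun x => rpow_nonneg (abs_nonneg (v x)) (2 * (1 - 1 / r)))
      (hf.memLp_of_hasCompactSupport hfs) (hvpow.memLp_of_hasCompactSupport hvpows)

end CompactSupport

section Spatial

open Module Metric

variable {E : Type*} [NormedAddCommGroup E] [NormedSpace ℝ E]

lemma HasOrliczGrowth.norm_fderiv_evenRoot_comp {g₀ g₁ p : ℝ} {g G : ℝ → ℝ}
    (h : HasOrliczGrowth g₀ g₁ g G) (hp : 0 < p) (hpg : p < g₀) {φ : E → ℝ} {x : E}
    (hφ : DifferentiableAt ℝ φ x) :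
    ‖fderiv ℝ (fun x => evenRoot G p (φ x)) x‖ =
      |evenRootDeriv g G p (φ x)| * ‖fderiv ℝ φ x‖ := by
  have hcomp : HasFDerivAt (fun x => evenRoot G p (φ x))
      (evenRootDeriv g G p (φ x) • fderiv ℝ φ x) x :=
    (h.hasDerivAt_evenRoot hp hpg (φ x)).comp_hasFDerivAt x hφ.hasFDerivAt
  rw [hcomp.fderiv, norm_smul, Real.norm_eq_abs]

variable [MeasurableSpace E] [BorelSpace E] [FiniteDimensional ℝ E] {μ : Measure E}
  [μ.IsAddHaarMeasure]

-- Integrate by parts against `x ↦ ℓ (x - x₀)`, where `ℓ` is a norming functional of a unit vector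
-- `e`: its derivative along `e` is `1`, and it is bounded by `R` on the support of `w`.
lemma integral_le_mul_integral_norm_fderiv [Nontrivial E] {x₀ : E} {R : ℝ} {w : E → ℝ}
    (hw : ContDiff ℝ 1 w) (hsupp : tsupport w ⊆ closedBall x₀ R) :
    ∫ x, w x ∂μ ≤ R * ∫ x, ‖fderiv ℝ w x‖ ∂μ := by
  have hs : HasCompactSupport w :=
    (isCompact_closedBall x₀ R).of_isClosed_subset (isClosed_tsupport w) hsupp
  obtain ⟨e, he⟩ := exists_norm_eq E zero_le_one
  obtain ⟨ℓ, hℓ, hℓe⟩ := exists_dual_vector ℝ e (by simp [he])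
  rw [he, RCLike.ofReal_one] at hℓe
  have hderiv : ∀ x, HasFDerivAt (fun x => ℓ (x - x₀)) ℓ x := fun x => by
    simpa only [map_sub] using ℓ.hasFDerivAt.sub_const (ℓ x₀)
  have hDw : Continuous (fderiv ℝ w) := hw.continuous_fderiv one_ne_zero
  have hDe : HasCompactSupport fun x => fderiv ℝ w x e := hs.fderiv_apply ℝ e
  have hint : Integrable (fun x => fderiv ℝ w x e * ℓ (x - x₀)) μ :=
    ((hDw.clm_apply continuous_const).mul (by fun_prop)).integrable_of_hasCompactSupport
      hDe.mul_right
  have hparts : ∫ x, w x ∂μ = -∫ x, fderiv ℝ w x e * ℓ (x - x₀) ∂μ := by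
    have hℓint : Integrable (fun x => w x * ℓ (x - x₀)) μ :=
      (hw.continuous.mul (by fun_prop)).integrable_of_hasCompactSupport hs.mul_right
    simpa only [(hderiv _).fderiv, hℓe, mul_one] using
      integral_mul_fderiv_eq_neg_fderiv_mul_of_integrable hint
        (by simpa only [(hderiv _).fderiv, hℓe, mul_one] using
          hw.continuous.integrable_of_hasCompactSupport hs)
        hℓint (fun x _ => hw.differentiable one_ne_zero x)
        (fun x _ => (hderiv x).differentiableAt)
  have hbound : ∀ x, -(fderiv ℝ w x e * ℓ (x - x₀)) ≤ R * ‖fderiv ℝ w x‖ := fun x => by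
    by_cases hx : x ∈ tsupport w
    · have hDx : ‖fderiv ℝ w x e‖ ≤ ‖fderiv ℝ w x‖ := by
        simpa only [he, mul_one] using (fderiv ℝ w x).le_opNorm e
      have hℓx : ‖ℓ (x - x₀)‖ ≤ R := calc
        ‖ℓ (x - x₀)‖ ≤ ‖ℓ‖ * ‖x - x₀‖ := ℓ.le_opNorm (x - x₀)
        _ = dist x x₀ := by rw [hℓ, one_mul, dist_eq_norm]
        _ ≤ R := hsupp hx
      calc -(fderiv ℝ w x e * ℓ (x - x₀)) ≤ ‖fderiv ℝ w x e‖ * ‖ℓ (x - x₀)‖ :=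
            (neg_le_abs _).trans_eq (abs_mul _ _)
        _ ≤ ‖fderiv ℝ w x‖ * R := by gcongr
        _ = R * ‖fderiv ℝ w x‖ := mul_comm _ _
    · simp [fderiv_of_notMem_tsupport ℝ hx]
  rw [hparts, ← integral_neg, ← integral_const_mul]
  exact integral_mono hint.neg
    ((hDw.norm.integrable_of_hasCompactSupport (hs.fderiv ℝ).norm).const_mul R) hbound

lemma rpow_integral_rpow_norm_le_rpow_integral_rpow_norm_fderiv {F : Type*} [NormedAddCommGroup F]
    [NormedSpace ℝ F] [FiniteDimensional ℝ F] {q r : ℝ} (hq : 1 ≤ q) (hr : 0 < r)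
    (hE : 0 < finrank ℝ E) (hqr : r⁻¹ = q⁻¹ - (finrank ℝ E : ℝ)⁻¹) {w : E → F}
    (hw : ContDiff ℝ 1 w) (hs : HasCompactSupport w) :
    (∫ x, ‖w x‖ ^ r ∂μ) ^ (1 / r) ≤
      SNormLESNormFDerivOfEqConst F μ q * (∫ x, ‖fderiv ℝ w x‖ ^ q ∂μ) ^ (1 / q) := by
  have hq0 : 0 < q := one_pos.trans_le hq
  lift q to NNReal using hq0.le
  lift r to NNReal using hr.le
  have hgns := eLpNorm_le_eLpNorm_fderiv_of_eq μ hw hs (by exact_mod_cast hq) hE hqr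
  have hwr : MemLp w r μ := hw.continuous.memLp_of_hasCompactSupport hs
  have hDwq : MemLp (fderiv ℝ w) q μ :=
    (hw.continuous_fderiv one_ne_zero).memLp_of_hasCompactSupport (hs.fderiv ℝ)
  rw [hwr.eLpNorm_eq_integral_rpow_norm (by exact_mod_cast hr.ne') ENNReal.coe_ne_top,
    hDwq.eLpNorm_eq_integral_rpow_norm (by exact_mod_cast hq0.ne') ENNReal.coe_ne_top,
    ← ENNReal.ofReal_coe_nnreal (p := SNormLESNormFDerivOfEqConst F μ q),
    ← ENNReal.ofReal_mul (NNReal.coe_nonneg _),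
    ENNReal.ofReal_le_ofReal_iff (by positivity)] at hgns
  simpa only [one_div, ENNReal.coe_toReal] using hgns

variable {g₀ g₁ q r R : ℝ} {g G : ℝ → ℝ} {x₀ : E} {φ : E → ℝ}

lemma HasOrliczGrowth.integral_comp_abs_le [Nontrivial E] (h : HasOrliczGrowth g₀ g₁ g G)
    (hR : 0 ≤ R) (hφ : ContDiff ℝ 1 φ) (hsupp : tsupport φ ⊆ closedBall x₀ R) :
    ∫ x, G |φ x| ∂μ ≤ (2 * g₁) ^ g₁ * ∫ x, G (R * ‖fderiv ℝ φ x‖) ∂μ := by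
  have hs : HasCompactSupport φ :=
    (isCompact_closedBall x₀ R).of_isClosed_subset (isClosed_tsupport φ) hsupp
  have hGφ : Integrable (fun x => G |φ x|) μ := by
    simpa using h.integrable_comp_mul_norm hφ.continuous hs zero_le_one
  have hGDφ : Integrable (fun x => G (R * ‖fderiv ℝ φ x‖)) μ :=
    h.integrable_comp_mul_norm (hφ.continuous_fderiv one_ne_zero) (hs.fderiv ℝ) hR
  have hw : ContDiff ℝ 1 fun x => evenRoot G 1 (φ x) :=
    (h.contDiff_evenRoot one_pos h.one_lt).comp hφ
  have hwsupp : tsupport (fun x => evenRoot G 1 (φ x)) ⊆ closedBall x₀ R :=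
    (tsupport_comp_subset (h.evenRoot_zero one_ne_zero) φ).trans hsupp
  have hpointwise : ∀ x, R * ‖fderiv ℝ (fun x => evenRoot G 1 (φ x)) x‖ ≤
      1 / 2 * (G |φ x| + (2 * g₁) ^ g₁ * G (R * ‖fderiv ℝ φ x‖)) := fun x => by
    have hyoung := h.two_mul_abs_evenRootDeriv_one_mul_le (φ x)
      (mul_nonneg hR (norm_nonneg (fderiv ℝ φ x)))
    rw [h.norm_fderiv_evenRoot_comp one_pos h.one_lt (hφ.differentiable one_ne_zero x)]
    linarith
  have hle := calc
    ∫ x, G |φ x| ∂μ = ∫ x, evenRoot G 1 (φ x) ∂μ := by simp only [evenRoot, div_one, rpow_one]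
    _ ≤ ∫ x, R * ‖fderiv ℝ (fun x => evenRoot G 1 (φ x)) x‖ ∂μ :=
      (integral_le_mul_integral_norm_fderiv hw hwsupp).trans_eq (integral_const_mul _ _).symm
    _ ≤ ∫ x, 1 / 2 * (G |φ x| + (2 * g₁) ^ g₁ * G (R * ‖fderiv ℝ φ x‖)) ∂μ :=
      integral_mono_of_nonneg (Eventually.of_forall fun x => by positivity)
        ((hGφ.add (hGDφ.const_mul _)).const_mul _) (Eventually.of_forall hpointwise)
    _ = 1 / 2 * (∫ x, G |φ x| ∂μ + (2 * g₁) ^ g₁ * ∫ x, G (R * ‖fderiv ℝ φ x‖) ∂μ) := by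
      rw [integral_const_mul, integral_add hGφ (hGDφ.const_mul _), integral_const_mul]
  linarith

lemma HasOrliczGrowth.integral_norm_fderiv_evenRoot_comp_rpow_le [Nontrivial E]
    (h : HasOrliczGrowth g₀ g₁ g G) (hq : 0 < q) (hqg : q < g₀) (hR : 0 < R)
    (hφ : ContDiff ℝ 1 φ) (hsupp : tsupport φ ⊆ closedBall x₀ R) :
    ∫ x, ‖fderiv ℝ (fun x => evenRoot G q (φ x)) x‖ ^ q ∂μ ≤
      (g₁ / q / R) ^ q * (((2 * g₁) ^ g₁ + 1) * ∫ x, G (R * ‖fderiv ℝ φ x‖) ∂μ) := by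
  have hs : HasCompactSupport φ :=
    (isCompact_closedBall x₀ R).of_isClosed_subset (isClosed_tsupport φ) hsupp
  have hg₁ : 0 < g₁ := one_pos.trans h.one_lt_upper
  have hGφ : Integrable (fun x => G |φ x|) μ := by
    simpa using h.integrable_comp_mul_norm hφ.continuous hs zero_le_one
  have hGDφ : Integrable (fun x => G (R * ‖fderiv ℝ φ x‖)) μ :=
    h.integrable_comp_mul_norm (hφ.continuous_fderiv one_ne_zero) (hs.fderiv ℝ) hR.le
  have hpointwise : ∀ x, ‖fderiv ℝ (fun x => evenRoot G q (φ x)) x‖ ^ q ≤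
      (g₁ / q / R) ^ q * (G |φ x| + G (R * ‖fderiv ℝ φ x‖)) := fun x => by
    have hbound := h.abs_evenRootDeriv_mul_rpow_le hq hqg.le (φ x)
      (mul_nonneg hR.le (norm_nonneg (fderiv ℝ φ x)))
    rw [h.norm_fderiv_evenRoot_comp hq hqg (hφ.differentiable one_ne_zero x),
      div_rpow (by positivity) hR.le, div_mul_eq_mul_div, le_div_iff₀ (by positivity),
      ← mul_rpow (by positivity) hR.le, mul_assoc, mul_comm _ R]
    exact hbound
  calc ∫ x, ‖fderiv ℝ (fun x => evenRoot G q (φ x)) x‖ ^ q ∂μ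
      ≤ ∫ x, (g₁ / q / R) ^ q * (G |φ x| + G (R * ‖fderiv ℝ φ x‖)) ∂μ :=
        integral_mono_of_nonneg (Eventually.of_forall fun x => by positivity)
          ((hGφ.add hGDφ).const_mul _) (Eventually.of_forall hpointwise)
    _ = (g₁ / q / R) ^ q * (∫ x, G |φ x| ∂μ + ∫ x, G (R * ‖fderiv ℝ φ x‖) ∂μ) := by
        rw [integral_const_mul, integral_add hGφ hGDφ]
    _ ≤ (g₁ / q / R) ^ q * (((2 * g₁) ^ g₁ + 1) * ∫ x, G (R * ‖fderiv ℝ φ x‖) ∂μ) := by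
        rw [add_one_mul]
        gcongr
        exact h.integral_comp_abs_le hR.le hφ hsupp

/-- The constant in the Sobolev inequality for `evenRoot G q ∘ φ`: the Gagliardo–Nirenberg–Sobolev
constant times the one in the bound of the gradient of this function by `G (R * ‖Dφ‖)`. -/
noncomputable def orliczSobolevConst (μ : Measure E) [μ.IsAddHaarMeasure] (g₁ q : ℝ) : ℝ :=
  SNormLESNormFDerivOfEqConst ℝ μ q * (g₁ / q) * ((2 * g₁) ^ g₁ + 1) ^ (1 / q)

lemma HasOrliczGrowth.rpow_integral_evenRoot_comp_rpow_le (h : HasOrliczGrowth g₀ g₁ g G)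
    (hq : 1 ≤ q) (hqg : q < g₀) (hr : 0 < r) (hE : 0 < finrank ℝ E)
    (hqr : r⁻¹ = q⁻¹ - (finrank ℝ E : ℝ)⁻¹) (hR : 0 < R) (hφ : ContDiff ℝ 1 φ)
    (hsupp : tsupport φ ⊆ closedBall x₀ R) :
    (∫ x, evenRoot G q (φ x) ^ r ∂μ) ^ (1 / r) ≤
      orliczSobolevConst μ g₁ q / R * (∫ x, G (R * ‖fderiv ℝ φ x‖) ∂μ) ^ (1 / q) := by
  have hq0 : 0 < q := one_pos.trans_le hq
  have hg₁ : 0 < g₁ := one_pos.trans h.one_lt_upper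
  have : Nontrivial E := finrank_pos_iff.1 hE
  have hs : HasCompactSupport φ :=
    (isCompact_closedBall x₀ R).of_isClosed_subset (isClosed_tsupport φ) hsupp
  have hI : 0 ≤ ∫ x, G (R * ‖fderiv ℝ φ x‖) ∂μ :=
    integral_nonneg fun x => h.nonneg (by positivity)
  have hgns := rpow_integral_rpow_norm_le_rpow_integral_rpow_norm_fderiv (μ := μ) hq hr hE hqr
    ((h.contDiff_evenRoot hq0 hqg).comp hφ) (hs.comp_left (h.evenRoot_zero hq0.ne'))
  simp only [Function.comp_apply, Real.norm_of_nonneg (h.evenRoot_nonneg q _)] at hgns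
  have hgrad := rpow_le_rpow (integral_nonneg fun x => by positivity)
    (h.integral_norm_fderiv_evenRoot_comp_rpow_le (μ := μ) hq0 hqg hR hφ hsupp)
    (one_div_nonneg.2 hq0.le)
  rw [mul_rpow (by positivity) (by positivity), mul_rpow (by positivity) hI,
    ← rpow_mul (by positivity), mul_one_div_cancel hq0.ne', rpow_one] at hgrad
  refine (hgns.trans (mul_le_mul_of_nonneg_left hgrad (NNReal.coe_nonneg _))).trans_eq ?_
  rw [orliczSobolevConst]
  ring

lemma HasOrliczGrowth.integral_rpow_mul_rpow_le (h : HasOrliczGrowth g₀ g₁ g G)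
    (hq : 1 ≤ q) (hqg : q < g₀) (hr : 1 < r) (hE : 0 < finrank ℝ E)
    (hqr : r⁻¹ = q⁻¹ - (finrank ℝ E : ℝ)⁻¹) (hR : 0 < R) {v : E → ℝ} (hv : ContDiff ℝ 1 v)
    (hsupp : tsupport v ⊆ closedBall x₀ R) :
    ∫ x, G (|v x| / R) ^ (1 / q) * |v x| ^ (2 * (1 - 1 / r)) ∂μ ≤
      orliczSobolevConst μ g₁ q / R * (∫ x, v x ^ 2 ∂μ) ^ (1 - 1 / r) *
        (∫ x, G ‖fderiv ℝ v x‖ ∂μ) ^ (1 / q) := by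
  have hq0 : 0 < q := one_pos.trans_le hq
  have hs : HasCompactSupport v :=
    (isCompact_closedBall x₀ R).of_isClosed_subset (isClosed_tsupport v) hsupp
  have hdiv : ContDiff ℝ 1 fun x => v x / R := hv.div_const R
  have hdivsupp : tsupport (fun x => v x / R) ⊆ closedBall x₀ R :=
    (tsupport_comp_subset (g := (· / R)) (zero_div R) v).trans hsupp
  have hgrad : ∀ x, R * ‖fderiv ℝ (fun x => v x / R) x‖ = ‖fderiv ℝ v x‖ := fun x => by
    simp only [div_eq_inv_mul]
    rw [fderiv_const_mul (hv.differentiable one_ne_zero x), norm_smul, norm_inv,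
      Real.norm_of_nonneg hR.le, mul_inv_cancel_left₀ hR.ne']
  have hsobolev := h.rpow_integral_evenRoot_comp_rpow_le (μ := μ) hq hqg (one_pos.trans hr) hE hqr
    hR hdiv hdivsupp
  have hholder := integral_mul_abs_rpow_le (μ := μ) hr
    ((h.continuous_evenRoot hq0).comp hdiv.continuous) (fun x => h.evenRoot_nonneg q _)
    (hs.comp_left (g := fun y => evenRoot G q (y / R)) (by simp [h.evenRoot_zero hq0.ne']))
    hv.continuous hs
  simp only [Function.comp_apply, evenRoot_div G q _ hR, hgrad] at hsobolev hholder
  calc _ ≤ _ := hholder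
    _ ≤ orliczSobolevConst μ g₁ q / R * (∫ x, G ‖fderiv ℝ v x‖ ∂μ) ^ (1 / q) *
          (∫ x, v x ^ 2 ∂μ) ^ (1 - 1 / r) := by gcongr
    _ = _ := mul_right_comm _ _ _

lemma setAverage_eq_inv_mul_integral_of_forall_notMem {α : Type*} [MeasurableSpace α]
    {μ : Measure α} {s : Set α} {f : α → ℝ} (hf : ∀ x ∉ s, f x = 0) :
    ⨍ x in s, f x ∂μ = (μ.real s)⁻¹ * ∫ x, f x ∂μ := by
  rw [setAverage_eq, smul_eq_mul, setIntegral_eq_integral_of_forall_compl_eq_zero hf]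

lemma addHaar_real_ball_rpow_inv_finrank (hE : finrank ℝ E ≠ 0) (hR : 0 < R) :
    μ.real (ball x₀ R) ^ (finrank ℝ E : ℝ)⁻¹ =
      R * μ.real (ball (0 : E) 1) ^ (finrank ℝ E : ℝ)⁻¹ := by
  rw [measureReal_def, Measure.addHaar_ball_of_pos μ x₀ hR, ENNReal.toReal_mul,
    ENNReal.toReal_ofReal (by positivity), ← measureReal_def,
    mul_rpow (by positivity) measureReal_nonneg, pow_rpow_inv_natCast hR.le hE]

lemma HasOrliczGrowth.setAverage_rpow_mul_rpow_le (h : HasOrliczGrowth g₀ g₁ g G)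
    (hq : 1 ≤ q) (hqg : q < g₀) (hr : 1 < r) (hE : 0 < finrank ℝ E)
    (hqr : r⁻¹ = q⁻¹ - (finrank ℝ E : ℝ)⁻¹) (hR : 0 < R) {v : E → ℝ} (hv : ContDiff ℝ 1 v)
    (hsupp : tsupport v ⊆ ball x₀ R) :
    ⨍ x in ball x₀ R, G (|v x| / R) ^ (1 / q) * |v x| ^ (2 * (1 - 1 / r)) ∂μ ≤
      orliczSobolevConst μ g₁ q * μ.real (ball (0 : E) 1) ^ (finrank ℝ E : ℝ)⁻¹ *
        (⨍ x in ball x₀ R, v x ^ 2 ∂μ) ^ (1 - 1 / r) *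
        (⨍ x in ball x₀ R, G ‖fderiv ℝ v x‖ ∂μ) ^ (1 / q) := by
  have ha : 0 < 1 - 1 / r := sub_pos.2 ((div_lt_one (one_pos.trans hr)).2 hr)
  have hv0 : ∀ x ∉ ball x₀ R, v x = 0 := fun x hx =>
    image_eq_zero_of_notMem_tsupport (notMem_subset hsupp hx)
  have hDv0 : ∀ x ∉ ball x₀ R, fderiv ℝ v x = 0 := fun x hx =>
    fderiv_of_notMem_tsupport ℝ (notMem_subset hsupp hx)
  rw [setAverage_eq_inv_mul_integral_of_forall_notMem fun x hx => by
      rw [hv0 x hx, abs_zero, zero_rpow (by positivity : 2 * (1 - 1 / r) ≠ 0), mul_zero],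
    setAverage_eq_inv_mul_integral_of_forall_notMem fun x hx => by
      rw [hv0 x hx, zero_pow two_ne_zero],
    setAverage_eq_inv_mul_integral_of_forall_notMem fun x hx => by
      rw [hDv0 x hx, norm_zero, h.map_zero]]
  have hV : 0 < μ.real (ball x₀ R) :=
    ENNReal.toReal_pos (measure_ball_pos μ x₀ hR).ne' measure_ball_lt_top.ne
  have hω : 0 < μ.real (ball (0 : E) 1) :=
    ENNReal.toReal_pos (measure_ball_pos μ 0 one_pos).ne' measure_ball_lt_top.ne
  have hexponents : 1 - 1 / r + 1 / q = 1 + (finrank ℝ E : ℝ)⁻¹ := by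
    rw [one_div, one_div, hqr]
    ring
  have hscale : (μ.real (ball x₀ R))⁻¹ * R⁻¹ = μ.real (ball (0 : E) 1) ^ (finrank ℝ E : ℝ)⁻¹ *
      ((μ.real (ball x₀ R))⁻¹ ^ (1 - 1 / r) * (μ.real (ball x₀ R))⁻¹ ^ (1 / q)) := by
    rw [← rpow_add (by positivity), hexponents, rpow_add (by positivity), rpow_one,
      inv_rpow hV.le, addHaar_real_ball_rpow_inv_finrank hE.ne' hR]
    field_simp
  have hI : 0 ≤ ∫ x, G ‖fderiv ℝ v x‖ ∂μ := integral_nonneg fun x => h.nonneg (norm_nonneg _)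
  rw [mul_rpow (by positivity) (integral_nonneg fun x => sq_nonneg _),
    mul_rpow (by positivity) hI]
  refine (mul_le_mul_of_nonneg_left (h.integral_rpow_mul_rpow_le hq hqg hr hE hqr hR hv
    (hsupp.trans ball_subset_closedBall)) (by positivity)).trans_eq ?_
  linear_combination (orliczSobolevConst μ g₁ q * (∫ x, v x ^ 2 ∂μ) ^ (1 - 1 / r) *
    (∫ x, G ‖fderiv ℝ v x‖ ∂μ) ^ (1 / q)) * hscale

end Spatial

section Average

variable {α : Type*} [MeasurableSpace α] {ν : Measure α} [IsFiniteMeasure ν]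

lemma integrable_rpow_of_nonneg_of_le_one {b : ℝ} (hb0 : 0 ≤ b) (hb1 : b ≤ 1) {F : α → ℝ}
    (hF0 : ∀ t, 0 ≤ F t) (hF : Integrable F ν) : Integrable (fun t => F t ^ b) ν := by
  have hmem : MemLp F (ENNReal.ofReal b) ν :=
    (memLp_one_iff_integrable.2 hF).mono_exponent (ENNReal.ofReal_le_one.2 hb1)
  simpa only [ENNReal.toReal_ofReal hb0, Real.norm_of_nonneg (hF0 _)] using
    hmem.integrable_norm_rpow'

variable [NeZero ν]

lemma average_rpow_le_rpow_average {b : ℝ} (hb0 : 0 ≤ b) (hb1 : b ≤ 1) {F : α → ℝ}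
    (hF0 : ∀ t, 0 ≤ F t) (hF : Integrable F ν) : ⨍ t, F t ^ b ∂ν ≤ (⨍ t, F t ∂ν) ^ b :=
  (concaveOn_rpow hb0 hb1).le_map_average
    (continuous_id.rpow_const fun _ => Or.inr hb0).continuousOn isClosed_Ici
    (Eventually.of_forall hF0) hF (integrable_rpow_of_nonneg_of_le_one hb0 hb1 hF0 hF)

lemma average_le_mul_essSup_rpow_mul_average_rpow {a b C : ℝ} (ha : 0 ≤ a) (hb0 : 0 ≤ b)
    (hb1 : b ≤ 1) (hC : 0 ≤ C) {A S F : α → ℝ} (hS0 : ∀ t, 0 ≤ S t) (hF0 : ∀ t, 0 ≤ F t)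
    (hS : IsBoundedUnder (· ≤ ·) (ae ν) S) (hA : Integrable A ν) (hF : Integrable F ν)
    (hle : ∀ᵐ t ∂ν, A t ≤ C * S t ^ a * F t ^ b) :
    ⨍ t, A t ∂ν ≤ C * essSup S ν ^ a * (⨍ t, F t ∂ν) ^ b := by
  have hsup : ∀ᵐ t ∂ν, S t ≤ essSup S ν := ae_le_essSup hS
  have hsup0 : 0 ≤ essSup S ν := by
    obtain ⟨t, ht⟩ := hsup.exists
    exact (hS0 t).trans ht
  have hbound : ∀ᵐ t ∂ν, A t ≤ C * essSup S ν ^ a * F t ^ b := by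
    filter_upwards [hle, hsup] with t hAt hSt
    refine hAt.trans ?_
    have := hS0 t
    have := rpow_nonneg (hF0 t) b
    gcongr
  calc ⨍ t, A t ∂ν ≤ ⨍ t, C * essSup S ν ^ a * F t ^ b ∂ν := by
        rw [average_eq, average_eq]
        exact smul_le_smul_of_nonneg_left (integral_mono_ae hA
          ((integrable_rpow_of_nonneg_of_le_one hb0 hb1 hF0 hF).const_mul _) hbound) (by positivity)
    _ = C * essSup S ν ^ a * ⨍ t, F t ^ b ∂ν := by
        rw [average_eq, average_eq, integral_const_mul, smul_eq_mul, smul_eq_mul, mul_left_comm]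
    _ ≤ C * essSup S ν ^ a * (⨍ t, F t ∂ν) ^ b := by
        gcongr
        exact average_rpow_le_rpow_average hb0 hb1 hF0 hF

end Average

section Fubini

variable {α β : Type*} [MeasurableSpace α] [MeasurableSpace β] {μ : Measure α} {ν : Measure β}
  [SFinite μ] [SFinite ν] {s : Set α} {t : Set β} {f : α × β → ℝ}

lemma integrableOn_setAverage_left (hf : IntegrableOn f (s ×ˢ t) (μ.prod ν)) :
    IntegrableOn (fun y => ⨍ x in s, f (x, y) ∂μ) t ν := by
  rw [IntegrableOn, ← Measure.prod_restrict] at hf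
  simp only [setAverage_eq]
  exact hf.integral_prod_right.smul (μ.real s)⁻¹

lemma setAverage_prod_symm (hf : IntegrableOn f (s ×ˢ t) (μ.prod ν)) :
    ⨍ z in s ×ˢ t, f z ∂μ.prod ν = ⨍ y in t, ⨍ x in s, f (x, y) ∂μ ∂ν := by
  rw [IntegrableOn, ← Measure.prod_restrict] at hf
  simp only [setAverage_eq, smul_eq_mul]
  rw [integral_const_mul, measureReal_prod_prod, ← Measure.prod_restrict, integral_prod_symm _ hf]
  ring

end Fubini

section BoundedProduct

variable {X Y : Type*} [MetricSpace X] [ProperSpace X] [MetricSpace Y] [ProperSpace Y]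
  [MeasurableSpace X] [MeasurableSpace Y] {μ : Measure X} {ν : Measure Y}
  {s : Set X} {t : Set Y} {f : X × Y → ℝ}

lemma isBoundedUnder_setAverage_left [IsFiniteMeasureOnCompacts μ] (hf : Continuous f)
    (hs : Bornology.IsBounded s) (ht : Bornology.IsBounded t) (htm : MeasurableSet t) :
    IsBoundedUnder (· ≤ ·) (ae (ν.restrict t)) fun y => ⨍ x in s, f (x, y) ∂μ := by
  obtain ⟨M, hM⟩ := (hs.prod ht).isCompact_closure.exists_bound_of_continuousOn hf.continuousOn
  refine ⟨(μ.real s)⁻¹ * (M * μ.real s), ?_⟩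
  rw [eventually_map]
  filter_upwards [ae_restrict_mem htm] with y hy
  rw [setAverage_eq, smul_eq_mul]
  gcongr
  exact (le_norm_self _).trans (norm_setIntegral_le_of_norm_le_const hs.measure_lt_top
    fun x hx => hM (x, y) (subset_closure ⟨hx, hy⟩))

lemma integrableOn_prod_of_isBounded [OpensMeasurableSpace X] [OpensMeasurableSpace Y]
    [IsFiniteMeasureOnCompacts (μ.prod ν)] (hf : Continuous f) (hs : Bornology.IsBounded s)
    (ht : Bornology.IsBounded t) : IntegrableOn f (s ×ˢ t) (μ.prod ν) :=
  (hf.continuousOn.integrableOn_compact (hs.prod ht).isCompact_closure).mono_set subset_closure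

end BoundedProduct

section Parabolic

open Module Metric

variable {E : Type*} [NormedAddCommGroup E] [NormedSpace ℝ E]

lemma HasOrliczGrowth.continuous_comp_norm_fderiv_slice {g₀ g₁ : ℝ} {g G : ℝ → ℝ}
    (h : HasOrliczGrowth g₀ g₁ g G) {u : E × ℝ → ℝ} (hu : ContDiff ℝ 1 u) :
    Continuous fun z : E × ℝ => G ‖fderiv ℝ (fun x => u (x, z.2)) z.1‖ :=
  h.continuous_comp_norm <| Continuous.fderiv_one (f := fun (z : E × ℝ) x => u (x, z.2))
    (hu.comp (contDiff_snd.prodMk (contDiff_snd.comp contDiff_fst))) continuous_fst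

lemma HasOrliczGrowth.continuous_rpow_mul_rpow {X : Type*} [TopologicalSpace X] {g₀ g₁ q a R : ℝ}
    {g G : ℝ → ℝ} (h : HasOrliczGrowth g₀ g₁ g G) (hq : 0 < q) (ha : 0 ≤ a) (hR : 0 < R)
    {f : X → ℝ} (hf : Continuous f) : Continuous fun x => G (|f x| / R) ^ (1 / q) * |f x| ^ a := by
  simp only [← evenRoot_div G q _ hR]
  exact ((h.continuous_evenRoot hq).comp (hf.div_const R)).mul
    (hf.abs.rpow_const fun _ => Or.inr ha)

variable [FiniteDimensional ℝ E] [MeasurableSpace E] [BorelSpace E] {μ : Measure E}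
  [μ.IsAddHaarMeasure]

lemma HasOrliczGrowth.setAverage_prod_rpow_mul_rpow_le {g₀ g₁ q r R C : ℝ} {g G : ℝ → ℝ} {x₀ : E}
    (h : HasOrliczGrowth g₀ g₁ g G) (hq : 1 ≤ q) (hqg : q < g₀) (hr : 1 < r)
    (hE : 0 < finrank ℝ E) (hqr : r⁻¹ = q⁻¹ - (finrank ℝ E : ℝ)⁻¹) (hR : 0 < R) (hC0 : 0 ≤ C)
    (hC : orliczSobolevConst μ g₁ q * μ.real (ball (0 : E) 1) ^ (finrank ℝ E : ℝ)⁻¹ ≤ C)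
    {Γ : Set ℝ} (hΓm : MeasurableSet Γ) (hΓb : Bornology.IsBounded Γ) (hΓ : volume Γ ≠ 0)
    {u : E × ℝ → ℝ} (hu : ContDiff ℝ 1 u)
    (hsupp : ∀ t ∈ Γ, tsupport (fun x => u (x, t)) ⊆ ball x₀ R) :
    ⨍ z in ball x₀ R ×ˢ Γ, G (|u z| / R) ^ (1 / q) * |u z| ^ (2 * (1 - 1 / r)) ∂μ.prod volume ≤
      C * essSup (fun t => ⨍ x in ball x₀ R, u (x, t) ^ 2 ∂μ) (volume.restrict Γ) ^ (1 - 1 / r) *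
        (⨍ z in ball x₀ R ×ˢ Γ, G ‖fderiv ℝ (fun x => u (x, z.2)) z.1‖ ∂μ.prod volume) ^
          (1 / q) := by
  have hq0 : 0 < q := one_pos.trans_le hq
  have ha : 0 < 1 - 1 / r := sub_pos.2 ((div_lt_one (one_pos.trans hr)).2 hr)
  have : NeZero (volume Γ) := ⟨hΓ⟩
  have : IsFiniteMeasure (volume.restrict Γ) := ⟨by simpa using hΓb.measure_lt_top⟩
  have hlhs : IntegrableOn
      (fun z => G (|u z| / R) ^ (1 / q) * |u z| ^ (2 * (1 - 1 / r))) (ball x₀ R ×ˢ Γ)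
      (μ.prod volume) :=
    integrableOn_prod_of_isBounded
      (h.continuous_rpow_mul_rpow hq0 (by positivity) hR hu.continuous) isBounded_ball hΓb
  have hgrad : IntegrableOn (fun z => G ‖fderiv ℝ (fun x => u (x, z.2)) z.1‖) (ball x₀ R ×ˢ Γ)
      (μ.prod volume) :=
    integrableOn_prod_of_isBounded (h.continuous_comp_norm_fderiv_slice hu) isBounded_ball hΓb
  have hS0 : ∀ t, 0 ≤ ⨍ x in ball x₀ R, u (x, t) ^ 2 ∂μ := fun t =>
    integral_nonneg fun x => sq_nonneg (u (x, t))
  have hF0 : ∀ t, 0 ≤ ⨍ x in ball x₀ R, G ‖fderiv ℝ (fun x => u (x, t)) x‖ ∂μ := fun t =>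
    integral_nonneg fun x => h.nonneg (norm_nonneg _)
  rw [setAverage_prod_symm hlhs, setAverage_prod_symm hgrad]
  refine average_le_mul_essSup_rpow_mul_average_rpow ha.le (by positivity)
    ((div_le_one hq0).2 hq) hC0 hS0 hF0
    (isBoundedUnder_setAverage_left (f := fun z => u z ^ 2) (hu.continuous.pow 2)
      isBounded_ball hΓb hΓm)
    (integrableOn_setAverage_left hlhs) (integrableOn_setAverage_left hgrad) ?_
  filter_upwards [ae_restrict_mem hΓm] with t ht
  have hslice : ContDiff ℝ 1 fun x => u (x, t) := hu.comp (contDiff_id.prodMk contDiff_const)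
  refine (h.setAverage_rpow_mul_rpow_le hq hqg hr hE hqr hR hslice (hsupp t ht)).trans ?_
  have := rpow_nonneg (hS0 t) (1 - 1 / r)
  have := rpow_nonneg (hF0 t) (1 / q)
  gcongr

end Parabolic

theorem parabolic_sobolev_orlicz_general {E : Type*} [NormedAddCommGroup E] [NormedSpace ℝ E]
    [FiniteDimensional ℝ E] [MeasurableSpace E] [BorelSpace E] (μ : Measure E)
    [μ.IsAddHaarMeasure] (g₁ : ℝ) {q : ℝ} (hq : 1 ≤ q) (hqd : q < Module.finrank ℝ E) :
    ∃ c : ℝ, 0 < c ∧ ∀ (g₀ : ℝ) (g G : ℝ → ℝ), HasOrliczGrowth g₀ g₁ g G → q < g₀ →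
      ∀ (x₀ : E) (R : ℝ), 0 < R →
      ∀ Γ : Set ℝ, MeasurableSet Γ → Bornology.IsBounded Γ → volume Γ ≠ 0 →
      ∀ u : E × ℝ → ℝ, ContDiff ℝ 1 u →
        (∀ t ∈ Γ, tsupport (fun x => u (x, t)) ⊆ Metric.ball x₀ R) →
        ⨍ z in Metric.ball x₀ R ×ˢ Γ, G (|u z| / R) ^ (1 / q) *
            |u z| ^ (2 * (1 - 1 / (Module.finrank ℝ E * q / (Module.finrank ℝ E - q))))
              ∂μ.prod volume ≤
          c * essSup (fun t => ⨍ x in Metric.ball x₀ R, u (x, t) ^ 2 ∂μ) (volume.restrict Γ) ^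
                (1 - 1 / (Module.finrank ℝ E * q / (Module.finrank ℝ E - q))) *
            (⨍ z in Metric.ball x₀ R ×ˢ Γ, G ‖fderiv ℝ (fun x => u (x, z.2)) z.1‖
              ∂μ.prod volume) ^ (1 / q) := by
  have hq0 : 0 < q := one_pos.trans_le hq
  have hE : 0 < Module.finrank ℝ E := by exact_mod_cast hq0.trans hqd
  have hdq : 0 < Module.finrank ℝ E - q := sub_pos.2 hqd
  have hr : 1 < Module.finrank ℝ E * q / (Module.finrank ℝ E - q) := by
    rw [one_lt_div hdq]
    nlinarith
  have hqr : (Module.finrank ℝ E * q / (Module.finrank ℝ E - q))⁻¹ =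
      q⁻¹ - (Module.finrank ℝ E : ℝ)⁻¹ := by
    field_simp
  exact ⟨max 1 _, lt_max_of_lt_left one_pos, fun g₀ g G h hqg x₀ R hR Γ hΓm hΓb hΓ u hu hsupp =>
    h.setAverage_prod_rpow_mul_rpow_le hq hqg hr hE hqr hR (by positivity) (le_max_right _ _)
      hΓm hΓb hΓ hu hsupp⟩

/-- Parabolic Sobolev inequality: for `1 ≤ q < min{n, g₀}` and `q* = nq/(n−q)`, there is
`c > 0` depending only on `n, g₁, q` such that for every `R > 0`, every bounded open
interval `Γ = (t₁,t₂)`, and every smooth `u` with `u(·,t)` compactly supported in `B_R`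
for all `t ∈ Γ`,
`⨍_{B_R×Γ} G(|u|/R)^{1/q}·|u|^{2(1−1/q*)} ≤ c·(ess sup_{t∈Γ} ⨍_{B_R} |u|²)^{1−1/q*}·(⨍_{B_R×Γ} G(|Du|))^{1/q}`. -/
theorem parabolic_sobolev_orlicz
    (n : ℕ) (hn : 2 ≤ n) (g₁ q : ℝ) (hq1 : 1 ≤ q) (hqn : q < n) (hg₁q : q < g₁) :
    ∃ c : ℝ, 0 < c ∧
      ∀ (g₀ : ℝ), 1 < g₀ → g₀ ≤ g₁ → q < g₀ →
      ∀ (g g' : ℝ → ℝ),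
        (∀ s, 0 < s → 0 < g s) →
        (∀ s, 0 < s → HasDerivAt g (g' s) s) →
        ContinuousOn g' (Set.Ioi 0) →
        (∀ s, 0 < s → (g₀ - 1) * g s ≤ s * g' s ∧ s * g' s ≤ (g₁ - 1) * g s) →
      ∀ (G : ℝ → ℝ), (∀ s, G s = ∫ r in (0:ℝ)..s, g r) →
      ∀ (R : ℝ), 0 < R → ∀ (x₀ : EuclideanSpace ℝ (Fin n)) (t₁ t₂ : ℝ), t₁ < t₂ →
      ∀ (u : EuclideanSpace ℝ (Fin n) × ℝ → ℝ),
        ContDiff ℝ (⊤ : ℕ∞) u →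
        (∀ t ∈ Set.Ioo t₁ t₂, HasCompactSupport (fun x => u (x, t)) ∧
          tsupport (fun x => u (x, t)) ⊆ Metric.ball x₀ R) →
        (⨍ z in (Metric.ball x₀ R) ×ˢ (Set.Ioo t₁ t₂),
            G (|u z| / R) ^ (1 / q) * |u z| ^ (2 * (1 - 1 / (n * q / (n - q)))))
          ≤ c * (essSup (fun t => ⨍ x in Metric.ball x₀ R, (u (x, t)) ^ 2)
                  (volume.restrict (Set.Ioo t₁ t₂))) ^ (1 - 1 / (n * q / (n - q)))
              * (⨍ z in (Metric.ball x₀ R) ×ˢ (Set.Ioo t₁ t₂),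
                  G ‖fderiv ℝ (fun x => u (x, z.2)) z.1‖) ^ (1 / q) := by
  have hfinrank := finrank_euclideanSpace_fin (𝕜 := ℝ) (n := n)
  obtain ⟨c, hc, hmain⟩ := parabolic_sobolev_orlicz_general
    (volume : Measure (EuclideanSpace ℝ (Fin n))) g₁ hq1 (by rwa [hfinrank])
  refine ⟨c, hc, fun g₀ hg₀ _ hqg g g' hg hg' _ hgrowth G hG R hR x₀ t₁ t₂ ht u hu hsupp => ?_⟩
  simpa only [hfinrank, Measure.volume_eq_prod] using
    hmain g₀ g G (.of_mul_deriv_bounds hg₀ hg hg' hgrowth hG) hqg x₀ R hR (Ioo t₁ t₂)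
      measurableSet_Ioo (Metric.isBounded_Ioo t₁ t₂) (by simpa using ht) u
      (hu.of_le (by exact_mod_cast le_top)) fun t htm => (hsupp t htm).2
end

section
/- The function G restricts to a strictly increasing continuous bijection of (0,∞) onto itself, and liminf_{s→∞} s²/G(s) = ∞ holds if and only if lim_{s→∞} s/G^{-1}(s²) = 0, where G^{-1} denotes the inverse of this bijection. -/
open Real MeasureTheory Set Filter

/-!
A positive function that is locally integrable on `[0, ∞)` but not integrable at `∞` has a strictly
increasing continuous primitive mapping `(0, ∞)` onto itself; the lower Orlicz bound makes `g`
increasing, which gives both properties. For the equivalence, substitute `s ^ 2 = G t`, i.e.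
`t = G⁻¹ (s ^ 2)`: the square of `s / G⁻¹ (s ^ 2)` becomes `G t / t ^ 2`, the reciprocal of
`t ^ 2 / G t`, and `t → ∞` exactly when `s → ∞`.
-/

section Filter

variable {α β : Type*}

theorem map_eq_of_tendsto_of_eventually_rightInverse {f : α → β} {g : β → α}
    {l : Filter α} {l' : Filter β} (hf : Tendsto f l l') (hg : Tendsto g l' l)
    (hfg : ∀ᶠ y in l', f (g y) = y) : map f l = l' := by
  refine le_antisymm hf ?_
  calc l' = map (f ∘ g) l' := ((map_congr hfg).trans map_id).symm
    _ = map f (map g l') := map_map.symm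
    _ ≤ map f l := map_mono hg

theorem tendsto_atTop_of_monotoneOn_of_surjOn_Ioi [Preorder α] [LinearOrder β] [NoMaxOrder β]
    {f : α → β} {a : α} {b : β} (hf : MonotoneOn f (Ioi a)) (hsurj : SurjOn f (Ioi a) (Ioi b)) :
    Tendsto f atTop atTop := by
  refine tendsto_atTop.2 fun M => ?_
  obtain ⟨y, hy⟩ := exists_gt (max b M)
  obtain ⟨x, hx, rfl⟩ := hsurj (mem_Ioi.2 (max_lt_iff.1 hy).1)
  filter_upwards [eventually_ge_atTop x] with t hxt
  exact (max_lt_iff.1 hy).2.le.trans (hf hx (lt_of_lt_of_le hx hxt) hxt)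

theorem tendsto_inv_nhds_zero_iff_tendsto_atTop {l : Filter α} {f : α → ℝ}
    (hf : ∀ᶠ x in l, 0 < f x) :
    Tendsto (fun x => (f x)⁻¹) l (nhds 0) ↔ Tendsto f l atTop := by
  refine ⟨fun h => ?_, fun h => h.inv_tendsto_atTop⟩
  have hinv : Tendsto (fun x => (f x)⁻¹) l (nhdsWithin 0 (Ioi 0)) :=
    tendsto_nhdsWithin_iff.2 ⟨h, hf.mono fun _ => inv_pos.2⟩
  exact hinv.inv_tendsto_nhdsGT_zero.congr fun x => inv_inv (f x)

theorem tendsto_rpow_nhds_zero_iff {l : Filter α} {f : α → ℝ} {p : ℝ} (hp : 0 < p)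
    (hf : ∀ᶠ x in l, 0 ≤ f x) :
    Tendsto (fun x => f x ^ p) l (nhds 0) ↔ Tendsto f l (nhds 0) := by
  constructor <;> intro h
  · have hroot := h.rpow_const (p := p⁻¹) (Or.inr (inv_pos.2 hp).le)
    rw [zero_rpow (inv_pos.2 hp).ne'] at hroot
    exact hroot.congr' (hf.mono fun x hx => rpow_rpow_inv hx hp.ne')
  · simpa only [zero_rpow hp.ne'] using h.rpow_const (p := p) (Or.inr hp.le)

theorem map_rpow_atTop {p : ℝ} (hp : 0 < p) : map (fun s : ℝ => s ^ p) atTop = atTop :=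
  map_eq_of_tendsto_of_eventually_rightInverse (tendsto_rpow_atTop hp)
    (tendsto_rpow_atTop (inv_pos.2 hp))
    ((eventually_ge_atTop 0).mono fun _ hy => rpow_inv_rpow hy hp.ne')

theorem tendsto_rpow_div_atTop_iff_tendsto_div_inverse_rpow {p : ℝ} (hp : 0 < p) {F H : ℝ → ℝ}
    (hF : Tendsto F atTop atTop) (hH : Tendsto H atTop atTop)
    (hHF : ∀ᶠ t in atTop, H (F t) = t) (hFH : ∀ᶠ y in atTop, F (H y) = y) :
    Tendsto (fun t => t ^ p / F t) atTop atTop ↔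
      Tendsto (fun s => s / H (s ^ p)) atTop (nhds 0) := by
  have hmapH : map H atTop = atTop := map_eq_of_tendsto_of_eventually_rightInverse hH hF hHF
  have hHpow : ∀ᶠ s : ℝ in atTop, 0 < H (s ^ p) :=
    (hH.comp (tendsto_rpow_atTop hp)).eventually_gt_atTop 0
  calc Tendsto (fun t => t ^ p / F t) atTop atTop
      ↔ Tendsto (fun t => F t / t ^ p) atTop (nhds 0) := by
        rw [← tendsto_inv_nhds_zero_iff_tendsto_atTop]
        · simp only [inv_div]
        · filter_upwards [eventually_gt_atTop 0, hF.eventually_gt_atTop 0] with t ht hFt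
          positivity
    _ ↔ Tendsto (fun y => F (H y) / H y ^ p) atTop (nhds 0) := by
        conv_lhs => rw [← hmapH]
        exact tendsto_map'_iff
    _ ↔ Tendsto (fun y => y / H y ^ p) atTop (nhds 0) :=
        tendsto_congr' (hFH.mono fun y hy => by simp only [hy])
    _ ↔ Tendsto (fun s : ℝ => s ^ p / H (s ^ p) ^ p) atTop (nhds 0) := by
        conv_lhs => rw [← map_rpow_atTop hp]
        exact tendsto_map'_iff
    _ ↔ Tendsto (fun s => (s / H (s ^ p)) ^ p) atTop (nhds 0) := by
        refine tendsto_congr' ?_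
        filter_upwards [eventually_ge_atTop 0, hHpow] with s hs hHs
        exact (div_rpow hs hHs.le p).symm
    _ ↔ Tendsto (fun s => s / H (s ^ p)) atTop (nhds 0) := by
        refine tendsto_rpow_nhds_zero_iff hp ?_
        filter_upwards [eventually_ge_atTop 0, hHpow] with s hs hHs
        positivity

end Filter

section Primitive

variable {f : ℝ → ℝ} {a : ℝ}

theorem strictMonoOn_Ici_primitive (hint : ∀ s, a ≤ s → IntervalIntegrable f volume a s)
    (hpos : ∀ s, a < s → 0 < f s) : StrictMonoOn (fun s => ∫ r in a..s, f r) (Ici a) := by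
  intro x hx y hy hxy
  have hxy_int : IntervalIntegrable f volume x y := (hint x hx).symm.trans (hint y hy)
  have hxy_pos : 0 < ∫ r in x..y, f r :=
    intervalIntegral.intervalIntegral_pos_of_pos_on hxy_int
      (fun r hr => hpos r (lt_of_le_of_lt hx hr.1)) hxy
  rwa [← intervalIntegral.integral_interval_sub_left (hint y hy) (hint x hx), sub_pos] at hxy_pos

theorem continuousOn_Ici_primitive (hint : ∀ s, a ≤ s → IntervalIntegrable f volume a s) :
    ContinuousOn (fun s => ∫ r in a..s, f r) (Ici a) := by
  intro x hx
  have hcont : ContinuousOn (fun s => ∫ r in a..s, f r) (Icc a (x + 1)) := by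
    have hle : a ≤ x + 1 := (mem_Ici.1 hx).trans (lt_add_one x).le
    simpa only [uIcc_of_le hle] using
      intervalIntegral.continuousOn_primitive_interval' (hint _ hle) left_mem_uIcc
  exact (hcont x ⟨hx, (lt_add_one x).le⟩).mono_of_mem_nhdsWithin
    (inter_mem_nhdsWithin _ (Iic_mem_nhds (lt_add_one x)))

theorem tendsto_primitive_atTop_of_eventually_const_le {c : ℝ} (hc : 0 < c)
    (hint : ∀ s, a ≤ s → IntervalIntegrable f volume a s) (hf : ∀ᶠ s in atTop, c ≤ f s) :
    Tendsto (fun s => ∫ r in a..s, f r) atTop atTop := by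
  obtain ⟨b, hb⟩ := eventually_atTop.1 (hf.and (eventually_ge_atTop a))
  have hab : a ≤ b := (hb b le_rfl).2
  have hlinear : Tendsto (fun s => (∫ r in a..b, f r) + (s - b) * c) atTop atTop :=
    tendsto_atTop_add_const_left _ _
      ((tendsto_atTop_add_const_right _ (-b) tendsto_id).atTop_mul_const hc)
  refine tendsto_atTop_mono' _ ?_ hlinear
  filter_upwards [eventually_ge_atTop b] with s hs
  have hbs : IntervalIntegrable f volume b s := (hint b hab).symm.trans (hint s (hab.trans hs))
  calc (∫ r in a..b, f r) + (s - b) * c = (∫ r in a..b, f r) + ∫ _ in b..s, c := by simp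
    _ ≤ (∫ r in a..b, f r) + ∫ r in b..s, f r := by
        gcongr
        exact intervalIntegral.integral_mono_on hs intervalIntegrable_const hbs
          fun r hr => (hb r hr.1).1
    _ = ∫ r in a..s, f r := intervalIntegral.integral_add_adjacent_intervals (hint b hab) hbs

theorem tendsto_primitive_atTop_of_monotoneOn_Ioi {b : ℝ} (hab : a < b) (hb : 0 < f b)
    (hf : MonotoneOn f (Ioi a)) (hint : ∀ s, a ≤ s → IntervalIntegrable f volume a s) :
    Tendsto (fun s => ∫ r in a..s, f r) atTop atTop :=
  tendsto_primitive_atTop_of_eventually_const_le hb hint <|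
    (eventually_ge_atTop b).mono fun _ hs => hf hab (hab.trans_le hs) hs

end Primitive

theorem intervalIntegrable_of_monotoneOn_Ioc {μ : Measure ℝ} [IsLocallyFiniteMeasure μ]
    {f : ℝ → ℝ} {a b : ℝ} (hab : a ≤ b) (hf : MonotoneOn f (Ioc a b))
    (hbdd : BddBelow (f '' Ioc a b)) : IntervalIntegrable f μ a b := by
  obtain ⟨m, hm⟩ := hbdd
  rw [intervalIntegrable_iff_integrableOn_Ioc_of_le hab]
  refine IntegrableOn.of_bound measure_Ioc_lt_top
    (aemeasurable_restrict_of_monotoneOn measurableSet_Ioc hf).aestronglyMeasurable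
    (max |m| |f b|) ?_
  filter_upwards [ae_restrict_mem measurableSet_Ioc] with x hx
  exact abs_le_max_abs_abs (hm (mem_image_of_mem f hx))
    (hf hx (right_mem_Ioc.2 (hx.1.trans_le hx.2)) hx.2)

theorem monotoneOn_Ioi_of_mul_le_mul_deriv {g g' : ℝ → ℝ} {c : ℝ} (hc : 0 ≤ c)
    (hg : ∀ s, 0 < s → 0 ≤ g s) (hderiv : ∀ s, 0 < s → HasDerivAt g (g' s) s)
    (hle : ∀ s, 0 < s → c * g s ≤ s * g' s) : MonotoneOn g (Ioi 0) := by
  have hg' : ∀ s, 0 < s → 0 ≤ g' s := fun s hs =>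
    nonneg_of_mul_nonneg_right ((mul_nonneg hc (hg s hs)).trans (hle s hs)) hs
  exact monotoneOn_of_hasDerivWithinAt_nonneg (convex_Ioi 0)
    (fun s hs => (hderiv s hs).continuousAt.continuousWithinAt)
    (fun s hs => (hderiv s (interior_subset hs)).hasDerivWithinAt)
    (fun s hs => hg' s (interior_subset hs))

theorem G_bijection_and_singular_case_equivalence_general {p : ℝ} (hp : 0 < p) {g G : ℝ → ℝ}
    (hg_pos : ∀ s, 0 < s → 0 < g s) (hg_int : ∀ s, 0 ≤ s → IntervalIntegrable g volume 0 s)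
    (hG : ∀ s, G s = ∫ r in (0 : ℝ)..s, g r) (hG_top : Tendsto G atTop atTop) :
    StrictMonoOn G (Ioi 0) ∧ ContinuousOn G (Ioi 0) ∧ BijOn G (Ioi 0) (Ioi 0) ∧
    ∀ Ginv : ℝ → ℝ, InvOn Ginv G (Ioi 0) (Ioi 0) →
      (Tendsto (fun s => s ^ p / G s) atTop atTop ↔
        Tendsto (fun s => s / Ginv (s ^ p)) atTop (nhds 0)) := by
  have hmono : StrictMonoOn G (Ici 0) := by
    simpa only [← hG] using strictMonoOn_Ici_primitive hg_int hg_pos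
  have hcont : ContinuousOn G (Ici 0) := by
    simpa only [← hG] using continuousOn_Ici_primitive hg_int
  have hmono' : StrictMonoOn G (Ioi 0) := hmono.mono Ioi_subset_Ici_self
  have hbij : BijOn G (Ioi 0) (Ioi 0) := by
    have hG_zero : G 0 = 0 := by rw [hG, intervalIntegral.integral_same]
    have himage : G '' Ioi 0 = Ioi 0 := by
      simpa only [hG_zero] using hcont.image_Ioi_of_strictMonoOn hmono hG_top
    simpa only [himage] using hmono'.injOn.bijOn_image
  refine ⟨hmono', hcont.mono Ioi_subset_Ici_self, hbij, fun Ginv hinv => ?_⟩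
  have hbij_inv : BijOn Ginv (Ioi 0) (Ioi 0) := hbij.symm hinv.symm
  have hmono_inv : MonotoneOn Ginv (Ioi 0) :=
    Function.monotoneOn_of_rightInvOn_of_mapsTo hmono'.monotoneOn hinv.2 hbij_inv.mapsTo
  exact tendsto_rpow_div_atTop_iff_tendsto_div_inverse_rpow hp hG_top
    (tendsto_atTop_of_monotoneOn_of_surjOn_Ioi hmono_inv hbij_inv.surjOn)
    ((eventually_gt_atTop 0).mono hinv.1) ((eventually_gt_atTop 0).mono hinv.2)

/-- `G` restricts to a strictly increasing continuous bijection of `(0,∞)` onto itself,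
and `liminf_{s→∞} s²/G(s) = ∞` (i.e. `s²/G(s) → ∞`) holds if and only if
`s/G⁻¹(s²) → 0` as `s → ∞`, where `G⁻¹` is the inverse of this bijection. -/
theorem G_bijection_and_singular_case_equivalence
    (g₀ g₁ : ℝ) (hg₀ : 1 < g₀) (hg01 : g₀ ≤ g₁)
    (g g' : ℝ → ℝ)
    (hg_pos : ∀ s, 0 < s → 0 < g s)
    (hg_deriv : ∀ s, 0 < s → HasDerivAt g (g' s) s)
    (hg'_cont : ContinuousOn g' (Set.Ioi 0))
    (hOrlicz : ∀ s, 0 < s → (g₀ - 1) * g s ≤ s * g' s ∧ s * g' s ≤ (g₁ - 1) * g s)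
    (G : ℝ → ℝ) (hG : ∀ s, G s = ∫ r in (0:ℝ)..s, g r) :
    StrictMonoOn G (Set.Ioi 0) ∧ ContinuousOn G (Set.Ioi 0) ∧
    Set.BijOn G (Set.Ioi 0) (Set.Ioi 0) ∧
    ∀ Ginv : ℝ → ℝ, Set.InvOn Ginv G (Set.Ioi 0) (Set.Ioi 0) →
      (Filter.Tendsto (fun s => s ^ 2 / G s) Filter.atTop Filter.atTop ↔
        Filter.Tendsto (fun s => s / Ginv (s ^ 2)) Filter.atTop (nhds 0)) := by
  have hmono : MonotoneOn g (Ioi 0) :=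
    monotoneOn_Ioi_of_mul_le_mul_deriv (sub_pos.2 hg₀).le (fun s hs => (hg_pos s hs).le) hg_deriv
      fun s hs => (hOrlicz s hs).1
  have hint : ∀ s, 0 ≤ s → IntervalIntegrable g volume 0 s := fun s hs =>
    intervalIntegrable_of_monotoneOn_Ioc hs (hmono.mono Ioc_subset_Ioi_self)
      ⟨0, forall_mem_image.2 fun r hr => (hg_pos r hr.1).le⟩
  have hG_top : Tendsto G atTop atTop := by
    simpa only [← hG] using
      tendsto_primitive_atTop_of_monotoneOn_Ioi one_pos (hg_pos 1 one_pos) hmono hint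
  simpa only [rpow_two] using
    G_bijection_and_singular_case_equivalence_general two_pos hg_pos hint hG hG_top
end
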